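/- arXiv:2505.05425 — 2 statements merged into one kernel-verified Lean document; each statement's English description precedes it below -/
import Mathlib

section
/- Fix d ∈ ℕ, ε ∈ (0,1/2], m ∈ ℕ, and a rectangle U ⊆ T^ω. Then U can be covered, up to a set of measure zero, by a family {E_n : n ∈ ℕ} of pairwise disjoint sets E_n := ⋃_{Q ∈ 𝒮_n} Q for some (ε,d)-configurations 𝒮_n, such that |E_{n₁}| = |E_{n₂}| whenever ⌈n₁/2^m⌉ = ⌈n₂/2^m⌉. -/
open MeasureTheory Filter Metric Topology ENNReal

/-- The one-dimensional torus `𝕋 = ℝ/ℤ`. -/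
abbrev 𝕋 : Type := AddCircle (1 : ℝ)

/-- The infinite-dimensional torus `𝕋^ω`, the countable product of copies of `𝕋`. -/
abbrev Torus : Type := ℕ → 𝕋

/-- A metric on `𝕋^ω` compatible with the product topology. -/
noncomputable instance : MetricSpace Torus := PiCountable.metricSpace

/-- The normalized Haar measure on the infinite-dimensional torus. -/
noncomputable def μT : MeasureTheory.Measure Torus := MeasureTheory.Measure.addHaarMeasure ⊤

/-- An interval (arc) in the one-dimensional torus: the image under the canonical projection
`ℝ → 𝕋` of an interval (order-connected set) of `ℝ`. -/
def IsArc (I : Set 𝕋) : Prop :=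
  ∃ J : Set ℝ, J.OrdConnected ∧ I = ((↑) : ℝ → 𝕋) '' J

/-- An open interval (arc) in the one-dimensional torus: the full torus, or the image of an
open interval of `ℝ` under the canonical projection `ℝ → 𝕋`. -/
def IsOpenArc (I : Set 𝕋) : Prop :=
  I = Set.univ ∨ ∃ a b : ℝ, I = ((↑) : ℝ → 𝕋) '' Set.Ioo a b

/-- A rectangle in `𝕋^ω` with sides parallel to the coordinate axes: a product `∏ d, I d` where
each `I d` is an interval in `𝕋`, and `I d = 𝕋` for all but finitely many `d`. -/
def IsRectangle (S : Set Torus) : Prop :=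
  ∃ I : ℕ → Set 𝕋, (∀ d, IsArc (I d)) ∧ (∀ᶠ d in Filter.cofinite, I d = Set.univ) ∧
    S = Set.univ.pi I

/-- An open rectangle in `𝕋^ω` with sides parallel to the coordinate axes. -/
def IsOpenRectangle (S : Set Torus) : Prop :=
  ∃ I : ℕ → Set 𝕋, (∀ d, IsOpenArc (I d)) ∧ (∀ᶠ d in Filter.cofinite, I d = Set.univ) ∧
    S = Set.univ.pi I
/-- For `m ≥ 1`, the unique `k` with `k² + k < m ≤ (k+1)² + (k+1)`. -/
def kOf (m : ℕ) : ℕ :=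
  Nat.find (⟨m, by nlinarith⟩ : ∃ k : ℕ, m ≤ (k + 1) ^ 2 + (k + 1))

/-- The exponent pattern of the dyadic Rubio de Francia set `V_m`: `expo m i` is the dyadic
exponent of the side of `V_m` in coordinate `i` (so that the side is `(0, 2^{-expo m i})`),
with `expo m i = 0` encoding a free coordinate (full torus). Starting with `(0,1/2) × 𝕋^{1,ω}`
at `m = 1`, at each step either a new coordinate of side `1/2` is appended or the sides are
successively halved, so that at `m = k² + k` one has `V_m = (0, 2^{-k})^{k+1} × 𝕋^{k+1,ω}`. -/
def expo (m : ℕ) (i : ℕ) : ℕ :=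
  let k := kOf m
  let r := m - (k ^ 2 + k)
  if r ≤ k + 1 then (if i < r then k + 1 else if i ≤ k then k else 0)
  else (if i ≤ k then k + 1 else if i = k + 1 then r - (k + 1) else 0)

/-- The dyadic rectangle in `𝕋^ω` with exponent pattern `e`, dyadic translation indices `t`,
and an additional real shift `c i` (in units of the side length `2^{-e i}`) in each nonfree
coordinate: the product of the arcs `((t i + c i)/2^{e i}, (t i + 1 + c i)/2^{e i})` over the
nonfree coordinates (times full tori in the free coordinates). -/
noncomputable def shiftedCell (e : ℕ → ℕ) (t : ℕ → ℕ) (c : ℕ → ℝ) : Set Torus :=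
  Set.univ.pi fun i =>
    if e i = 0 then Set.univ
    else ((↑) : ℝ → 𝕋) ''
      Set.Ioo (((t i : ℝ) + c i) / 2 ^ e i) (((t i : ℝ) + 1 + c i) / 2 ^ e i)

/-- The dyadic rectangle with exponent pattern `e` and dyadic translation indices `t`. -/
noncomputable def dyadicCell (e : ℕ → ℕ) (t : ℕ → ℕ) : Set Torus :=
  shiftedCell e t fun _ => 0

/-- The dyadic Rubio de Francia basis `R₀`: all sets `t + V_m` for `m ≥ 1` and `t` in the
dyadic grid `H_m`. -/
def R0 : Set (Set Torus) :=
  {S | ∃ (m : ℕ) (t : ℕ → ℕ), 0 < m ∧ (∀ i, t i < 2 ^ expo m i) ∧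
        S = dyadicCell (expo m) t}

/-- `𝒮` is an `(ε, d)`-configuration around `Q₀`: here `Q₀ = t + V_m ∈ R₀` satisfies
`|Q₀| ≤ 2^{-(d-1)²-1}` (hence has at least `d` nonfree coordinates), and
`𝒮 = {Q₀, Q₁, …, Q_d}` where, for `1 ≤ i ≤ d`, the set `Q_i` is `Q₀` translated to the right
in its `i`-th coordinate by `(1-ε)` times the side length, so that `|Q_i ∩ Q₀| = ε |Q₀|`. -/
def IsConfig (ε : ℝ) (d : ℕ) (Q₀ : Set Torus) (𝒮 : Set (Set Torus)) : Prop :=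
  ∃ (m : ℕ) (t : ℕ → ℕ), 0 < m ∧ (∀ i, t i < 2 ^ expo m i) ∧
    Q₀ = dyadicCell (expo m) t ∧
    μT Q₀ ≤ 2⁻¹ ^ ((d - 1) ^ 2 + 1) ∧
    (∀ i < d, expo m i ≠ 0) ∧
    𝒮 = insert Q₀
      {Q | ∃ i < d, Q = shiftedCell (expo m) t fun j => if j = i then 1 - ε else 0}

section DisjointCovering

variable {X ι : Type*} [MeasurableSpace X] {μ : Measure X} [IsFiniteMeasure μ] {cell : ℕ → X → ι}

/-- An open set of positive measure is covered, up to half of its measure, by the cells of some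
level that it contains. -/
theorem exists_half_measure_lt_cells {W : Set X} (hW : μ W ≠ 0)
    (hsmall : ∀ x ∈ W, ∀ᶠ k in atTop, cell k ⁻¹' {cell k x} ⊆ W) :
    ∃ k, μ W / 2 < μ {x | cell k ⁻¹' {cell k x} ⊆ W} := by
  set B : ℕ → Set X := fun N => {x | ∀ k ≥ N, cell k ⁻¹' {cell k x} ⊆ W} with hB
  have hmono : Monotone B := fun N N' h x hx k hk => hx k (h.trans hk)
  have hU : ⋃ N, B N = W := by
    ext x
    simp only [Set.mem_iUnion]
    constructor
    · rintro ⟨N, hN⟩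
      exact hN N le_rfl rfl
    · intro hx
      exact eventually_atTop.1 (hsmall x hx)
  have ht := tendsto_measure_iUnion_atTop (μ := μ) hmono
  rw [hU] at ht
  obtain ⟨N, hN⟩ := (ht.eventually (lt_mem_nhds
    (ENNReal.half_lt_self hW (measure_ne_top μ W)))).exists
  exact ⟨N, hN.trans_le (measure_mono fun x hx => hx N le_rfl)⟩

variable [TopologicalSpace X] [BorelSpace X] {M : ℕ} {E : ℕ → ι → ℕ → Set X} {c : ℝ≥0∞}

/-- One step of the greedy selection: inside a nonempty open set `W`, choose finitely many cells
whose pieces fill a fixed proportion of `W` while leaving an open nonempty remainder. -/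
theorem exists_finset_cells_measure_diff_le [μ.IsOpenPosMeasure]
    (hfin : ∀ k, (Set.range (cell k)).Finite)
    (hmeas : ∀ k u, MeasurableSet (cell k ⁻¹' {u}))
    (hsmall : ∀ W, IsOpen W → ∀ x ∈ W, ∀ᶠ k in atTop, cell k ⁻¹' {cell k x} ⊆ W)
    (hM : 0 < M) (hc : c ≠ 0)
    (hopen : ∀ k, ∀ u ∈ Set.range (cell k), ∀ j ≤ M, IsOpen (E k u j))
    (hsub : ∀ k, ∀ u ∈ Set.range (cell k), ∀ j ≤ M, E k u j ⊆ cell k ⁻¹' {u})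
    (hdisj : ∀ k, ∀ u ∈ Set.range (cell k), ∀ i ≤ M, ∀ j ≤ M, i ≠ j →
      Disjoint (E k u i) (E k u j))
    (hpos : ∀ k, ∀ u ∈ Set.range (cell k), ∀ j ≤ M, c * μ (cell k ⁻¹' {u}) ≤ μ (E k u j))
    {W : Set X} (hWo : IsOpen W) (hWn : W.Nonempty) :
    ∃ (k : ℕ) (T : Finset ι), T.Nonempty ∧
      (∀ u ∈ T, u ∈ Set.range (cell k) ∧ cell k ⁻¹' {u} ⊆ W) ∧
      (W \ ⋃ u ∈ T, ⋃ j ∈ Finset.range M, closure (E k u j)).Nonempty ∧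
      μ (W \ ⋃ u ∈ T, ⋃ j ∈ Finset.range M, closure (E k u j)) ≤ (1 - c / 2) * μ W := by
  classical
  have hW0 : μ W ≠ 0 := (hWo.measure_pos μ hWn).ne'
  obtain ⟨k, hk⟩ := exists_half_measure_lt_cells hW0 (hsmall W hWo)
  have hTfin : {u | u ∈ Set.range (cell k) ∧ cell k ⁻¹' {u} ⊆ W}.Finite :=
    (hfin k).subset fun u hu => hu.1
  set T := hTfin.toFinset with hTdef
  have hT : ∀ u ∈ T, u ∈ Set.range (cell k) ∧ cell k ⁻¹' {u} ⊆ W := fun u hu => by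
    simpa [hTdef] using hu
  have hcover : {x | cell k ⁻¹' {cell k x} ⊆ W} = ⋃ u ∈ T, cell k ⁻¹' {u} := by
    ext x
    simp [hTdef]
  have hcelldisj : (T : Set ι).PairwiseDisjoint fun u => cell k ⁻¹' {u} := by
    intro u _ v _ huv
    exact Disjoint.preimage _ (by simpa using huv)
  have hsum : μ W / 2 < ∑ u ∈ T, μ (cell k ⁻¹' {u}) := by
    rw [← measure_biUnion_finset hcelldisj fun u _ => hmeas k u, ← hcover]
    exact hk
  obtain ⟨v, hvT, hv⟩ : ∃ v ∈ T, μ (cell k ⁻¹' {v}) ≠ 0 := by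
    by_contra! h
    rw [Finset.sum_eq_zero h] at hsum
    exact _root_.not_lt_zero hsum
  have hspare_open := hopen k v (hT v hvT).1 M le_rfl
  have hspare_pos : μ (E k v M) ≠ 0 := fun h => by
    have := hpos k v (hT v hvT).1 M le_rfl
    simp [h, hc, hv] at this
  refine ⟨k, T, ⟨v, hvT⟩, hT, ?_, ?_⟩
  · obtain ⟨x, hx⟩ := nonempty_of_measure_ne_zero hspare_pos
    refine ⟨x, (hT v hvT).2 (hsub k v (hT v hvT).1 M le_rfl hx), ?_⟩
    simp only [Set.mem_iUnion, not_exists, Finset.mem_range]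
    intro u hu j hj hxu
    refine Set.disjoint_left.1 (Disjoint.closure_right ?_ hspare_open) hx hxu
    by_cases huv : u = v
    · subst huv
      exact hdisj k u (hT u hu).1 M le_rfl j hj.le hj.ne'
    · exact Disjoint.mono (hsub k v (hT v hvT).1 M le_rfl) (hsub k u (hT u hu).1 j hj.le)
        (hcelldisj hvT hu (Ne.symm huv))
  · set F := ⋃ u ∈ T, E k u 0 with hF
    have hFW : F ⊆ W := Set.iUnion₂_subset fun u hu =>
      (hsub k u (hT u hu).1 0 (Nat.zero_le _)).trans (hT u hu).2
    have hFopen : IsOpen F :=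
      isOpen_biUnion fun u hu => hopen k u (hT u hu).1 0 (Nat.zero_le _)
    have hFμ : c / 2 * μ W ≤ μ F := by
      rw [hF, measure_biUnion_finset]
      · calc c / 2 * μ W = c * (μ W / 2) := by
              rw [div_eq_mul_inv, div_eq_mul_inv]; ring
          _ ≤ c * ∑ u ∈ T, μ (cell k ⁻¹' {u}) := by gcongr
          _ = ∑ u ∈ T, c * μ (cell k ⁻¹' {u}) := Finset.mul_sum ..
          _ ≤ _ := Finset.sum_le_sum fun u hu => hpos k u (hT u hu).1 0 (Nat.zero_le _)
      · intro u hu w hw huw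
        exact Disjoint.mono (hsub k u (hT u hu).1 0 (Nat.zero_le _))
          (hsub k w (hT w hw).1 0 (Nat.zero_le _)) (hcelldisj hu hw huw)
      · exact fun u hu => (hopen k u (hT u hu).1 0 (Nat.zero_le _)).measurableSet
    calc μ (W \ ⋃ u ∈ T, ⋃ j ∈ Finset.range M, closure (E k u j)) ≤ μ (W \ F) := by
          refine measure_mono (Set.sdiff_subset_sdiff_right ?_)
          refine Set.iUnion₂_mono fun u _ => ?_
          exact subset_closure.trans
            (Set.subset_biUnion_of_mem (u := fun j => closure (E k u j)) (by simpa using hM))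
      _ = μ W - μ F := measure_sdiff hFW hFopen.measurableSet.nullMeasurableSet
          (measure_ne_top μ F)
      _ ≤ μ W - c / 2 * μ W := tsub_le_tsub_left hFμ _
      _ = (1 - c / 2) * μ W := by
          rw [ENNReal.sub_mul fun _ _ => measure_ne_top μ W, one_mul]

/-- Greedy exhaustion: if every cell of every level contains `M + 1` disjoint open pieces with null
boundary, each of measure at least a fixed proportion of the cell, then almost all of the space is
covered by a disjoint sequence of pieces, consecutive blocks of `M` of which come from one cell. -/
theorem exists_pairwise_disjoint_pieces_ae_cover [μ.IsOpenPosMeasure] [Nonempty X]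
    (hfin : ∀ k, (Set.range (cell k)).Finite)
    (hmeas : ∀ k u, MeasurableSet (cell k ⁻¹' {u}))
    (hsmall : ∀ W, IsOpen W → ∀ x ∈ W, ∀ᶠ k in atTop, cell k ⁻¹' {cell k x} ⊆ W)
    (hM : 0 < M) (hc : c ≠ 0)
    (hopen : ∀ k, ∀ u ∈ Set.range (cell k), ∀ j ≤ M, IsOpen (E k u j))
    (hsub : ∀ k, ∀ u ∈ Set.range (cell k), ∀ j ≤ M, E k u j ⊆ cell k ⁻¹' {u})
    (hdisj : ∀ k, ∀ u ∈ Set.range (cell k), ∀ i ≤ M, ∀ j ≤ M, i ≠ j →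
      Disjoint (E k u i) (E k u j))
    (hpos : ∀ k, ∀ u ∈ Set.range (cell k), ∀ j ≤ M, c * μ (cell k ⁻¹' {u}) ≤ μ (E k u j))
    (hbd : ∀ k, ∀ u ∈ Set.range (cell k), ∀ j ≤ M, μ (closure (E k u j) \ E k u j) = 0) :
    ∃ (k : ℕ → ℕ) (u : ℕ → ι), (∀ b, u b ∈ Set.range (cell (k b))) ∧
      (Pairwise fun n n' => Disjoint (E (k (n / M)) (u (n / M)) (n % M))
        (E (k (n' / M)) (u (n' / M)) (n' % M))) ∧
      μ (⋃ n, E (k (n / M)) (u (n / M)) (n % M))ᶜ = 0 := by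
  classical
  choose! K T hTn hT hrem hle using fun (W : Set X) (hW : IsOpen W ∧ W.Nonempty) =>
    exists_finset_cells_measure_diff_le hfin hmeas hsmall hM hc hopen hsub hdisj hpos hW.1 hW.2
  set step : Set X → Set X := fun W =>
    W \ ⋃ u ∈ T W, ⋃ j ∈ Finset.range M, closure (E (K W) u j) with hstep
  set W : ℕ → Set X := fun n => step^[n] Set.univ with hWdef
  have hWsucc : ∀ n, W (n + 1) = step (W n) := fun n => Function.iterate_succ_apply' ..
  have hW : ∀ n, IsOpen (W n) ∧ (W n).Nonempty := by
    intro n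
    induction n with
    | zero => exact ⟨isOpen_univ, Set.univ_nonempty⟩
    | succ n ih =>
      rw [hWsucc]
      refine ⟨ih.1.sdiff ?_, hrem _ ih⟩
      refine isClosed_biUnion_finset fun u _ => isClosed_biUnion_finset fun j _ => isClosed_closure
  have hanti : Antitone W := antitone_nat_of_succ_le fun n => by
    rw [hWsucc]; exact Set.sdiff_subset
  have hμW : ∀ n, μ (W n) ≤ (1 - c / 2) ^ n * μ Set.univ := by
    intro n
    induction n with
    | zero => simp [hWdef]
    | succ n ih =>
      rw [hWsucc, pow_succ', mul_assoc]
      exact (hle _ (hW n)).trans (by gcongr)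
  have hinter : μ (⋂ n, W n) = 0 := by
    have hlt : 1 - c / 2 < 1 :=
      ENNReal.sub_lt_self ENNReal.one_ne_top one_ne_zero (by simp [hc])
    have h1 : Tendsto (fun n => (1 - c / 2) ^ n * μ Set.univ) atTop (𝓝 (0 * μ Set.univ)) :=
      ENNReal.Tendsto.mul_const (ENNReal.tendsto_pow_atTop_nhds_zero_of_lt_one hlt)
        (Or.inr (measure_ne_top μ _))
    rw [zero_mul] at h1
    exact le_antisymm (ge_of_tendsto' h1 fun n =>
      (measure_mono (Set.iInter_subset _ n)).trans (hμW n)) zero_le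
  let B : Type _ := Σ n, {u // u ∈ T (W n)}
  have : Infinite B := by
    choose f hf using fun n => hTn _ (hW n)
    exact Infinite.of_injective (fun n => (⟨n, f n, hf n⟩ : B)) fun a b hab =>
      congrArg Sigma.fst hab
  obtain ⟨hden⟩ := nonempty_denumerable B
  let e : ℕ ≃ B := (Denumerable.eqv B).symm
  have hmem : ∀ b : B, b.2.1 ∈ Set.range (cell (K (W b.1))) ∧
      cell (K (W b.1)) ⁻¹' {b.2.1} ⊆ W b.1 := fun b => hT _ (hW b.1) _ b.2.2
  set P : B → ℕ → Set X := fun b j => E (K (W b.1)) b.2.1 j with hP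
  have hPW : ∀ b, ∀ j < M, P b j ⊆ W b.1 := fun b j hj =>
    (hsub _ _ (hmem b).1 j hj.le).trans (hmem b).2
  have hPsucc : ∀ (b : B), ∀ j < M, Disjoint (P b j) (W (b.1 + 1)) := by
    intro b j hj
    rw [hWsucc]
    refine Set.disjoint_left.2 fun x hx hx' => hx'.2 ?_
    simp only [Set.mem_iUnion]
    exact ⟨b.2.1, b.2.2, j, by simpa using hj, subset_closure hx⟩
  have hPlt : ∀ b b' : B, b.1 < b'.1 → ∀ i < M, ∀ j < M, Disjoint (P b i) (P b' j) :=
    fun b b' h i hi j hj => (hPsucc b i hi).mono_right ((hPW b' j hj).trans (hanti h))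
  have hPdisj : ∀ b b' : B, ∀ i < M, ∀ j < M, (b ≠ b' ∨ i ≠ j) →
      Disjoint (P b i) (P b' j) := by
    rintro ⟨n, u, hu⟩ ⟨n', u', hu'⟩ i hi j hj hne
    rcases lt_trichotomy n n' with h | h | h
    · exact hPlt _ _ h i hi j hj
    · subst h
      by_cases huu : u = u'
      · subst huu
        exact hdisj _ _ (hmem ⟨n, u, hu⟩).1 i hi.le j hj.le (by simpa using hne)
      · refine Disjoint.mono (hsub _ _ (hmem ⟨n, u, hu⟩).1 i hi.le)
          (hsub _ _ (hmem ⟨n, u', hu'⟩).1 j hj.le) (Disjoint.preimage _ (by simpa using huu))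
    · exact (hPlt _ _ h j hj i hi).symm
  refine ⟨fun b => K (W (e b).1), fun b => (e b).2.1, fun b => (hmem (e b)).1, ?_, ?_⟩
  · intro n n' hn
    refine hPdisj _ _ _ (Nat.mod_lt _ hM) _ (Nat.mod_lt _ hM) ?_
    by_contra! h
    have h1 := e.injective h.1
    exact hn (by rw [← Nat.div_add_mod n M, ← Nat.div_add_mod n' M, h1, h.2])
  · have hbnull : μ (⋃ b : B, ⋃ j ∈ Finset.range M, (closure (P b j) \ P b j)) = 0 := by
      refine measure_iUnion_null fun b => ?_
      refine (measure_biUnion_null_iff (Finset.countable_toSet _)).2 fun j hj => ?_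
      exact hbd _ _ (hmem b).1 j (Finset.mem_range.1 hj).le
    refine measure_mono_null ?_ (measure_union_null hinter hbnull)
    intro x hx
    by_contra hcon
    simp only [Set.mem_union, not_or, Set.mem_iInter, not_forall] at hcon
    obtain ⟨⟨n, hn⟩, hcon2⟩ := hcon
    have hex : ∃ n, x ∉ W n := ⟨n, hn⟩
    obtain ⟨p, hp⟩ : ∃ p, Nat.find hex = p + 1 := by
      refine Nat.exists_eq_succ_of_ne_zero fun h0 => ?_
      have := Nat.find_spec hex
      rw [h0] at this
      exact this (Set.mem_univ x)
    have hxp : x ∈ W p := by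
      by_contra h
      exact Nat.find_min hex (m := p) (by omega) h
    have hxp' : x ∉ step (W p) := by
      have := Nat.find_spec hex
      rwa [hp, hWsucc] at this
    have : x ∈ ⋃ u ∈ T (W p), ⋃ j ∈ Finset.range M, closure (E (K (W p)) u j) := by
      by_contra h
      exact hxp' ⟨hxp, h⟩
    simp only [Set.mem_iUnion] at this
    obtain ⟨u, hu, j, hj, hxu⟩ := this
    refine hcon2 ?_
    simp only [Set.mem_iUnion]
    refine ⟨⟨p, u, hu⟩, j, hj, hxu, fun hxP => hx ?_⟩
    have hjM := Finset.mem_range.1 hj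
    refine Set.mem_iUnion.2 ⟨M * e.symm ⟨p, u, hu⟩ + j, ?_⟩
    rw [Nat.mul_add_div hM, Nat.div_eq_of_lt hjM, Nat.mul_add_mod, Nat.mod_eq_of_lt hjM,
      add_zero]
    change x ∈ P (e (e.symm ⟨p, u, hu⟩)) j
    rw [e.apply_symm_apply]
    exact hxP

end DisjointCovering

section Circle

/-- The representative in `[0, 1)` of a point of the circle. -/
noncomputable def circleRep (y : 𝕋) : ℝ := AddCircle.equivIco 1 0 y

theorem circleRep_mem (y : 𝕋) : circleRep y ∈ Set.Ico (0 : ℝ) 1 := by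
  simpa [circleRep] using (AddCircle.equivIco (1 : ℝ) 0 y).2

theorem coe_circleRep (y : 𝕋) : (circleRep y : 𝕋) = y :=
  (AddCircle.equivIco (1 : ℝ) 0).symm_apply_apply y

theorem circleRep_coe {a : ℝ} (ha : a ∈ Set.Ico (0 : ℝ) 1) : circleRep (a : 𝕋) = a := by
  rw [circleRep, AddCircle.equivIco_coe_eq (by simpa using ha)]

theorem measurable_circleRep : Measurable circleRep :=
  measurable_subtype_coe.comp (AddCircle.measurableEquivIco (1 : ℝ) 0).measurable

theorem image_coe_Ioo_eq_preimage_circleRep {a b : ℝ} (ha : 0 ≤ a) (hb : b ≤ 1) :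
    ((↑) : ℝ → 𝕋) '' Set.Ioo a b = circleRep ⁻¹' Set.Ioo a b := by
  ext y
  constructor
  · rintro ⟨x, hx, rfl⟩
    rw [Set.mem_preimage, circleRep_coe ⟨ha.trans hx.1.le, hx.2.trans_le hb⟩]
    exact hx
  · exact fun hy => ⟨_, hy, coe_circleRep y⟩

theorem volume_preimage_circleRep_Ioo {a b : ℝ} (ha : 0 ≤ a) (hb : b ≤ 1) :
    volume (circleRep ⁻¹' Set.Ioo a b) = ENNReal.ofReal (b - a) := by
  have hm : MeasurableSet (circleRep ⁻¹' Set.Ioo a b) := measurable_circleRep measurableSet_Ioo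
  rw [← (UnitAddCircle.measurePreserving_mk 0).measure_preimage hm.nullMeasurableSet,
    Measure.restrict_apply (AddCircle.measurable_mk' hm), ← Real.volume_Ioo]
  congr 1
  ext x
  simp only [Set.mem_inter_iff, Set.mem_preimage, Set.mem_Ioo, Set.mem_Ioc, zero_add]
  constructor
  · rintro ⟨h, h0, h1⟩
    rcases h1.eq_or_lt with rfl | h1
    · have h10 : ((1 : ℝ) : 𝕋) = ((0 : ℝ) : 𝕋) := by simp [AddCircle.coe_period]
      rw [h10, circleRep_coe (by simp)] at h
      linarith
    · rwa [circleRep_coe ⟨h0.le, h1⟩] at h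
  · rintro ⟨h0, h1⟩
    rw [circleRep_coe ⟨by linarith, by linarith⟩]
    exact ⟨⟨h0, h1⟩, by linarith, by linarith⟩

theorem volume_preimage_circleRep_Ico_le (a b : ℝ) :
    volume (circleRep ⁻¹' Set.Ico a b) ≤ ENNReal.ofReal (b - a) := by
  have hm : MeasurableSet (circleRep ⁻¹' Set.Ico a b) := measurable_circleRep measurableSet_Ico
  rw [← (UnitAddCircle.measurePreserving_mk 0).measure_preimage hm.nullMeasurableSet,
    Measure.restrict_apply (AddCircle.measurable_mk' hm), ← Real.volume_Ico]
  refine (measure_mono (t := Set.Ico a b ∪ {1}) ?_).trans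
    ((measure_union_le _ _).trans (by simp))
  rintro x ⟨h, h0, h1⟩
  rw [zero_add] at h1
  rcases h1.eq_or_lt with rfl | h1
  · exact Or.inr rfl
  · rw [Set.mem_preimage, Set.mem_preimage, circleRep_coe ⟨h0.le, h1⟩] at h
    exact Or.inl h

theorem volume_closure_image_coe_Ioo_diff (a b : ℝ) :
    volume (closure (((↑) : ℝ → 𝕋) '' Set.Ioo a b) \ ((↑) : ℝ → 𝕋) '' Set.Ioo a b) = 0 := by
  have hcont : Continuous ((↑) : ℝ → 𝕋) := AddCircle.continuous_mk' 1
  have hsub : closure (((↑) : ℝ → 𝕋) '' Set.Ioo a b) \ ((↑) : ℝ → 𝕋) '' Set.Ioo a b ⊆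
      {(a : 𝕋), (b : 𝕋)} := by
    rintro y ⟨hy, hy'⟩
    have hcl : closure (((↑) : ℝ → 𝕋) '' Set.Ioo a b) ⊆ ((↑) : ℝ → 𝕋) '' Set.Icc a b :=
      closure_minimal (Set.image_mono Set.Ioo_subset_Icc_self)
        (isCompact_Icc.image hcont).isClosed
    obtain ⟨x, hx, rfl⟩ := hcl hy
    by_contra hne
    simp only [Set.mem_insert_iff, Set.mem_singleton_iff, not_or] at hne
    exact hy' ⟨x, ⟨lt_of_le_of_ne hx.1 fun h => hne.1 (by rw [h]),
      lt_of_le_of_ne hx.2 fun h => hne.2 (by rw [h])⟩, rfl⟩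
  refine measure_mono_null hsub ?_
  have hs : ∀ y : 𝕋, volume ({y} : Set 𝕋) = 0 := fun y => by
    have := AddCircle.volume_closedBall (T := 1) (x := y) 0
    simpa using this
  rw [Set.insert_eq]
  exact measure_union_null (hs _) (hs _)

instance : IsProbabilityMeasure (volume : Measure 𝕋) := ⟨UnitAddCircle.measure_univ⟩

end Circle

section TorusMeasure

instance : μT.IsAddHaarMeasure := by unfold μT; infer_instance

instance : IsProbabilityMeasure μT := ⟨by
  have := Measure.addHaarMeasure_self (K₀ := (⊤ : TopologicalSpace.PositiveCompacts Torus))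
  simpa [μT] using this⟩

theorem μT_eq_infinitePi : μT = Measure.infinitePi fun _ : ℕ => (volume : Measure 𝕋) := by
  set ν := Measure.infinitePi fun _ : ℕ => (volume : Measure 𝕋) with hν
  have hinv : ν.IsAddLeftInvariant := ⟨fun g => by
    have := Measure.infinitePi_map_pi (fun _ : ℕ => (volume : Measure 𝕋))
      (f := fun i y => g i + y) (fun i => measurable_const_add _)
    simp only [map_add_left_eq_self] at this
    exact this⟩
  have hh : ν.IsAddHaarMeasure :=
    Measure.isAddHaarMeasure_of_isCompact_nonempty_interior ν Set.univ isCompact_univ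
      (by simp) (by simp) (by simp)
  exact Measure.isAddHaarMeasure_eq_of_isProbabilityMeasure _ _

theorem μT_pi_univ {n : ℕ} {A : ℕ → Set 𝕋} (hA : ∀ i, MeasurableSet (A i))
    (h : ∀ i, n ≤ i → A i = Set.univ) :
    μT (Set.univ.pi A) = ∏ i ∈ Finset.range n, volume (A i) := by
  have : Set.univ.pi A = (Finset.range n : Set ℕ).pi A := by
    ext x
    simp only [Set.mem_pi, Set.mem_univ, forall_true_left, Finset.coe_range, Set.mem_Iio]
    refine ⟨fun hx i _ => hx i, fun hx i => ?_⟩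
    rcases lt_or_ge i n with hi | hi
    · exact hx i hi
    · rw [h i hi]; trivial
  rw [this, μT_eq_infinitePi, Measure.infinitePi_pi _ fun i _ => hA i]

theorem μT_eval_preimage_null (i : ℕ) {s : Set 𝕋} (hs : volume s = 0) :
    μT (Function.eval i ⁻¹' s) = 0 := by
  rw [μT_eq_infinitePi]
  exact (measurePreserving_eval_infinitePi (fun _ : ℕ => (volume : Measure 𝕋))
    i).quasiMeasurePreserving.preimage_null hs

end TorusMeasure

section ShiftedCell

variable {e : ℕ → ℕ}

theorem isOpen_shiftedCell (he : {i | e i ≠ 0}.Finite) (t : ℕ → ℕ) (c : ℕ → ℝ) :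
    IsOpen (shiftedCell e t c) := by
  have : shiftedCell e t c = {i | e i ≠ 0}.pi fun i => ((↑) : ℝ → 𝕋) ''
      Set.Ioo (((t i : ℝ) + c i) / 2 ^ e i) (((t i : ℝ) + 1 + c i) / 2 ^ e i) := by
    ext x
    simp only [shiftedCell, Set.mem_pi, Set.mem_univ, forall_true_left, Set.mem_ofPred_eq]
    refine forall_congr' fun i => ?_
    by_cases h : e i = 0 <;> simp [h]
  rw [this]
  exact isOpen_set_pi he fun i _ => QuotientAddGroup.isOpenMap_coe _ isOpen_Ioo

theorem μT_closure_shiftedCell_diff (t : ℕ → ℕ) (c : ℕ → ℝ) :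
    μT (closure (shiftedCell e t c) \ shiftedCell e t c) = 0 := by
  unfold shiftedCell
  set A : ℕ → Set 𝕋 := fun i => if e i = 0 then Set.univ else ((↑) : ℝ → 𝕋) ''
      Set.Ioo (((t i : ℝ) + c i) / 2 ^ e i) (((t i : ℝ) + 1 + c i) / 2 ^ e i) with hA
  have hsub : closure (Set.univ.pi A) \ Set.univ.pi A ⊆
      ⋃ i, Function.eval i ⁻¹' (closure (A i) \ A i) := by
    rw [closure_pi_set]
    rintro x ⟨hx, hx'⟩
    simp only [Set.mem_pi, Set.mem_univ, forall_true_left, not_forall] at hx hx'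
    obtain ⟨i, hi⟩ := hx'
    exact Set.mem_iUnion.2 ⟨i, hx i, hi⟩
  refine measure_mono_null hsub (measure_iUnion_null fun i => μT_eval_preimage_null i ?_)
  by_cases h : e i = 0
  · simp [hA, h]
  · simp only [hA, h, if_false]
    exact volume_closure_image_coe_Ioo_diff _ _

theorem add_mem_image_coe_Ioo_iff {y : 𝕋} {a b δ : ℝ} :
    (δ : 𝕋) + y ∈ ((↑) : ℝ → 𝕋) '' Set.Ioo (a + δ) (b + δ) ↔
      y ∈ ((↑) : ℝ → 𝕋) '' Set.Ioo a b := by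
  constructor
  · rintro ⟨x, hx, hxy⟩
    refine ⟨x - δ, ⟨by linarith [hx.1], by linarith [hx.2]⟩, ?_⟩
    rw [AddCircle.coe_sub, hxy]
    abel
  · rintro ⟨x, hx, rfl⟩
    exact ⟨δ + x, ⟨by linarith [hx.1], by linarith [hx.2]⟩, AddCircle.coe_add ..⟩

theorem preimage_add_shiftedCell (t t' : ℕ → ℕ) (c : ℕ → ℝ) :
    (fun x : Torus => (fun i => ((((t' i : ℝ) - t i) / 2 ^ e i : ℝ) : 𝕋)) + x) ⁻¹'
      shiftedCell e t' c = shiftedCell e t c := by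
  ext x
  simp only [shiftedCell, Set.mem_preimage, Set.mem_pi, Set.mem_univ, forall_true_left,
    Pi.add_apply]
  refine forall_congr' fun i => ?_
  by_cases h : e i = 0
  · simp [h]
  · simp only [h, if_false]
    rw [show ((t' i : ℝ) + c i) / 2 ^ e i =
        (t i + c i) / 2 ^ e i + (t' i - t i) / 2 ^ e i by ring,
      show ((t' i : ℝ) + 1 + c i) / 2 ^ e i =
        (t i + 1 + c i) / 2 ^ e i + (t' i - t i) / 2 ^ e i by ring]
    exact add_mem_image_coe_Ioo_iff

theorem μT_dyadicCell {n : ℕ} (he : ∀ i, e i = 0 ↔ n ≤ i) {t : ℕ → ℕ} (ht : ∀ i, t i < 2 ^ e i) :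
    μT (dyadicCell e t) = ∏ i ∈ Finset.range n, (2⁻¹ : ℝ≥0∞) ^ e i := by
  have harc : ∀ i, ((↑) : ℝ → 𝕋) '' Set.Ioo (((t i : ℝ) + 0) / 2 ^ e i)
      (((t i : ℝ) + 1 + 0) / 2 ^ e i) = circleRep ⁻¹' Set.Ioo (((t i : ℝ) + 0) / 2 ^ e i)
      (((t i : ℝ) + 1 + 0) / 2 ^ e i) ∧ volume (circleRep ⁻¹' Set.Ioo (((t i : ℝ) + 0) / 2 ^ e i)
      (((t i : ℝ) + 1 + 0) / 2 ^ e i)) = 2⁻¹ ^ e i := by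
    intro i
    have h0 : (0 : ℝ) ≤ ((t i : ℝ) + 0) / 2 ^ e i := by positivity
    have h1 : ((t i : ℝ) + 1 + 0) / 2 ^ e i ≤ 1 := by
      rw [div_le_one (by positivity), add_zero]
      exact_mod_cast ht i
    refine ⟨image_coe_Ioo_eq_preimage_circleRep h0 h1, ?_⟩
    rw [volume_preimage_circleRep_Ioo h0 h1, ← ENNReal.inv_pow,
      show ((t i : ℝ) + 1 + 0) / 2 ^ e i - ((t i : ℝ) + 0) / 2 ^ e i = (2 ^ e i)⁻¹ by ring,
      ENNReal.ofReal_inv_of_pos (by positivity), ENNReal.ofReal_pow (by norm_num)]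
    simp
  rw [dyadicCell, shiftedCell, μT_pi_univ (n := n)]
  · refine Finset.prod_congr rfl fun i hi => ?_
    have : e i ≠ 0 := fun h => absurd ((he i).1 h) (by simpa using hi)
    simp only [this, if_false]
    rw [(harc i).1, (harc i).2]
  · intro i
    split_ifs
    · exact MeasurableSet.univ
    · rw [(harc i).1]
      exact measurable_circleRep measurableSet_Ioo
  · intro i hi
    simp [(he i).2 hi]

end ShiftedCell

section Configuration

/-- The family `{Q₀, …, Q_d}` consisting of a dyadic rectangle and its `d` translates. -/
def configFamily (ε : ℝ) (d : ℕ) (e t : ℕ → ℕ) : Set (Set Torus) :=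
  insert (dyadicCell e t)
    {Q | ∃ i < d, Q = shiftedCell e t fun j => if j = i then 1 - ε else 0}

variable {ε : ℝ} {d : ℕ} {e : ℕ → ℕ}

theorem finite_configFamily (t : ℕ → ℕ) : (configFamily ε d e t).Finite := by
  refine Set.Finite.insert _ (((Set.finite_Iio d).image fun i =>
    shiftedCell e t fun j => if j = i then 1 - ε else 0).subset ?_)
  rintro Q ⟨i, hi, rfl⟩
  exact ⟨i, hi, rfl⟩

theorem exists_eq_shiftedCell {t : ℕ → ℕ} {Q : Set Torus} (hQ : Q ∈ configFamily ε d e t) :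
    ∃ c, Q = shiftedCell e t c := by
  rcases hQ with rfl | ⟨i, _, rfl⟩
  exacts [⟨_, rfl⟩, ⟨_, rfl⟩]

theorem isOpen_sUnion_configFamily (he : {i | e i ≠ 0}.Finite) (t : ℕ → ℕ) :
    IsOpen (⋃₀ configFamily ε d e t) := by
  refine isOpen_sUnion fun Q hQ => ?_
  obtain ⟨c, rfl⟩ := exists_eq_shiftedCell hQ
  exact isOpen_shiftedCell he t c

theorem μT_closure_sUnion_configFamily_diff (t : ℕ → ℕ) :
    μT (closure (⋃₀ configFamily ε d e t) \ ⋃₀ configFamily ε d e t) = 0 := by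
  rw [(finite_configFamily t).closure_sUnion]
  have hsub : (⋃ Q ∈ configFamily ε d e t, closure Q) \ ⋃₀ configFamily ε d e t ⊆
      ⋃ Q ∈ configFamily ε d e t, closure Q \ Q := by
    rintro x ⟨hx, hx'⟩
    simp only [Set.mem_iUnion] at hx ⊢
    obtain ⟨Q, hQ, hxQ⟩ := hx
    exact ⟨Q, hQ, hxQ, fun h => hx' ⟨Q, hQ, h⟩⟩
  refine measure_mono_null hsub
    ((measure_biUnion_null_iff (finite_configFamily t).countable).2 fun Q hQ => ?_)
  obtain ⟨c, rfl⟩ := exists_eq_shiftedCell hQ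
  exact μT_closure_shiftedCell_diff t c

theorem μT_sUnion_configFamily_eq (t t' : ℕ → ℕ) :
    μT (⋃₀ configFamily ε d e t) = μT (⋃₀ configFamily ε d e t') := by
  rw [← measure_preimage_add μT (fun i => ((((t' i : ℝ) - t i) / 2 ^ e i : ℝ) : 𝕋))
    (⋃₀ configFamily ε d e t')]
  congr 1
  have himage : configFamily ε d e t = (fun Q => (fun x : Torus =>
      (fun i => ((((t' i : ℝ) - t i) / 2 ^ e i : ℝ) : 𝕋)) + x) ⁻¹' Q) ''
        configFamily ε d e t' := by
    ext Q
    simp only [configFamily, Set.image_insert_eq, dyadicCell, preimage_add_shiftedCell,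
      Set.mem_insert_iff, Set.mem_ofPred_eq, Set.mem_image]
    refine or_congr Iff.rfl ⟨?_, ?_⟩
    · rintro ⟨i, hi, rfl⟩
      exact ⟨_, ⟨i, hi, rfl⟩, preimage_add_shiftedCell ..⟩
    · rintro ⟨_, ⟨i, hi, rfl⟩, rfl⟩
      exact ⟨i, hi, preimage_add_shiftedCell ..⟩
  rw [himage, Set.sUnion_image, Set.preimage_sUnion]

/-- Every set of a configuration lies in the dyadic rectangle doubled in the first `d`
coordinates. -/
theorem circleRep_mul_mem_of_mem_sUnion_configFamily (hε : 0 ≤ ε) (hε' : ε ≤ 1) {t : ℕ → ℕ}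
    (ht : ∀ i, t i < 2 ^ e i) (ht' : ∀ i < d, t i + 2 ≤ 2 ^ e i) {x : Torus}
    (hx : x ∈ ⋃₀ configFamily ε d e t) (i : ℕ) :
    (t i : ℝ) ≤ circleRep (x i) * 2 ^ e i ∧
      circleRep (x i) * 2 ^ e i < t i + (if i < d then 2 else 1) := by
  have key : ∀ c : ℕ → ℝ, (∀ i, 0 ≤ c i) → (∀ i, c i ≤ 1) → (∀ i, ¬ i < d → c i = 0) →
      x ∈ shiftedCell e t c → (t i : ℝ) ≤ circleRep (x i) * 2 ^ e i ∧
      circleRep (x i) * 2 ^ e i < t i + (if i < d then 2 else 1) := by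
    intro c h0 h1 hd hxc
    have hxi := hxc i (Set.mem_univ i)
    have hpow : (0 : ℝ) < 2 ^ e i := by positivity
    by_cases he : e i = 0
    · have h := ht i
      simp only [he, pow_zero, Nat.lt_one_iff] at h
      have := circleRep_mem (x i)
      simp only [h, he, pow_zero, mul_one, Nat.cast_zero, zero_add]
      exact ⟨this.1, this.2.trans_le (by split_ifs <;> norm_num)⟩
    · simp only [he, if_false] at hxi
      rw [image_coe_Ioo_eq_preimage_circleRep] at hxi
      · obtain ⟨ha, hb⟩ := hxi
        rw [div_lt_iff₀ hpow] at ha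
        rw [lt_div_iff₀ hpow] at hb
        refine ⟨by linarith [h0 i], ?_⟩
        split_ifs with hi
        · linarith [h1 i]
        · linarith [hd i hi]
      · have := h0 i
        positivity
      · rw [div_le_one hpow]
        by_cases hi : i < d
        · have : ((t i + 2 : ℕ) : ℝ) ≤ ((2 ^ e i : ℕ) : ℝ) := by exact_mod_cast ht' i hi
          push_cast at this
          linarith [h1 i]
        · have : ((t i + 1 : ℕ) : ℝ) ≤ ((2 ^ e i : ℕ) : ℝ) := by exact_mod_cast ht i
          push_cast at this
          linarith [hd i hi]
  obtain ⟨Q, rfl | ⟨j, hj, rfl⟩, hxQ⟩ := hx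
  · exact key _ (fun _ => le_rfl) (fun _ => zero_le_one) (fun _ _ => rfl) hxQ
  · refine key _ (fun i => ?_) (fun i => ?_) (fun i hi => ?_) hxQ
    · split_ifs <;> linarith
    · split_ifs <;> linarith
    · rw [if_neg (by rintro rfl; exact hi hj)]

end Configuration

section Levels

theorem expo_sq_add_self {k : ℕ} (hk : 0 < k) (i : ℕ) :
    expo (k ^ 2 + k) i = if i ≤ k then k else 0 := by
  obtain ⟨l, rfl⟩ : ∃ l, k = l + 1 := ⟨k - 1, by omega⟩
  have hkOf : kOf ((l + 1) ^ 2 + (l + 1)) = l := by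
    rw [kOf, Nat.find_eq_iff]
    exact ⟨le_rfl, fun n hn => by nlinarith⟩
  have hr : (l + 1) ^ 2 + (l + 1) - (l ^ 2 + l) = 2 * l + 2 := by
    have : (l + 1) ^ 2 + (l + 1) = (2 * l + 2) + (l ^ 2 + l) := by ring
    omega
  simp only [expo, hkOf, hr]
  split_ifs <;> omega

/-- The exponents of a coarse dyadic rectangle: those of level `k`, lowered by `s` in the first `d`
coordinates. -/
def coarseExpo (d s k i : ℕ) : ℕ := if i < d then k - s else if i ≤ k then k else 0

/-- The translation indices of the coarse dyadic rectangle containing a point. -/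
noncomputable def coarseIndex (d s k : ℕ) (x : Torus) (i : ℕ) : ℕ :=
  ⌊circleRep (x i) * 2 ^ coarseExpo d s k i⌋₊

/-- The translation indices of the level-`k` dyadic rectangle placed at the `j`-th position along
the first coordinate inside the coarse rectangle with indices `u`. -/
def pieceIndex (d s : ℕ) (u : ℕ → ℕ) (j i : ℕ) : ℕ :=
  if i < d then 2 ^ s * u i + (if i = 0 then 2 * j else 0) else u i

variable {d s k : ℕ}

theorem coarseIndex_lt (x : Torus) (i : ℕ) : coarseIndex d s k x i < 2 ^ coarseExpo d s k i := by
  have h := circleRep_mem (x i)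
  rw [coarseIndex, Nat.floor_lt (mul_nonneg h.1 (by positivity))]
  push_cast
  exact mul_lt_of_lt_one_left (by positivity) h.2

theorem lt_of_mem_range_coarseIndex {u : ℕ → ℕ} (hu : u ∈ Set.range (coarseIndex d s k)) (i : ℕ) :
    u i < 2 ^ coarseExpo d s k i := by
  obtain ⟨x, rfl⟩ := hu
  exact coarseIndex_lt x i

theorem coarseExpo_eq_zero (hd : d ≤ k) {i : ℕ} (hi : k < i) : coarseExpo d s k i = 0 := by
  simp [coarseExpo, show ¬ i < d by omega, show ¬ i ≤ k by omega]

theorem coarseExpo_le (i : ℕ) : coarseExpo d s k i ≤ k := by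
  unfold coarseExpo
  split_ifs <;> omega

theorem finite_range_coarseIndex (hd : d ≤ k) : (Set.range (coarseIndex d s k)).Finite := by
  refine (Set.finite_range fun (v : Fin (k + 1) → Fin (2 ^ k)) (i : ℕ) =>
    if h : i < k + 1 then (v ⟨i, h⟩ : ℕ) else 0).subset ?_
  rintro _ ⟨x, rfl⟩
  refine ⟨fun i => ⟨coarseIndex d s k x i, (coarseIndex_lt x i).trans_le
    (Nat.pow_le_pow_right (by norm_num) (coarseExpo_le _))⟩, ?_⟩
  funext i
  by_cases h : i < k + 1
  · simp [h]
  · have := coarseIndex_lt (d := d) (s := s) (k := k) x i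
    rw [coarseExpo_eq_zero hd (by omega)] at this
    simp only [pow_zero, Nat.lt_one_iff] at this
    simp [h, this]

theorem preimage_coarseIndex_singleton (u : ℕ → ℕ) :
    coarseIndex d s k ⁻¹' {u} = Set.univ.pi fun i =>
      circleRep ⁻¹' {r | ⌊r * 2 ^ coarseExpo d s k i⌋₊ = u i} := by
  ext x
  simp [coarseIndex, funext_iff]

theorem measurableSet_floor_mul_eq (f v : ℕ) :
    MeasurableSet (circleRep ⁻¹' {r | ⌊r * 2 ^ f⌋₊ = v}) :=
  measurable_circleRep ((Nat.measurable_floor.comp (measurable_id.mul_const _))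
    (measurableSet_singleton v))

theorem measurableSet_preimage_coarseIndex (u : ℕ → ℕ) :
    MeasurableSet (coarseIndex d s k ⁻¹' {u}) := by
  rw [preimage_coarseIndex_singleton]
  exact MeasurableSet.univ_pi fun i => measurableSet_floor_mul_eq _ _

theorem μT_preimage_coarseIndex_le (hd : d ≤ k) {u : ℕ → ℕ}
    (hu : u ∈ Set.range (coarseIndex d s k)) :
    μT (coarseIndex d s k ⁻¹' {u}) ≤
      ∏ i ∈ Finset.range (k + 1), (2⁻¹ : ℝ≥0∞) ^ coarseExpo d s k i := by
  rw [preimage_coarseIndex_singleton, μT_pi_univ (n := k + 1)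
    fun i => measurableSet_floor_mul_eq _ _]
  · refine Finset.prod_le_prod' fun i _ => ?_
    set f := coarseExpo d s k i
    have hpow : (0 : ℝ) < 2 ^ f := by positivity
    refine (measure_mono (t := circleRep ⁻¹' Set.Ico ((u i : ℝ) / 2 ^ f) ((u i + 1) / 2 ^ f))
      ?_).trans ((volume_preimage_circleRep_Ico_le _ _).trans_eq ?_)
    · intro y hy
      have h := (Nat.floor_eq_iff (mul_nonneg (circleRep_mem y).1 hpow.le)).1 hy
      exact ⟨(div_le_iff₀ hpow).2 h.1, (lt_div_iff₀ hpow).2 h.2⟩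
    · rw [← ENNReal.inv_pow, show ((u i : ℝ) + 1) / 2 ^ f - u i / 2 ^ f = (2 ^ f)⁻¹ by ring,
        ENNReal.ofReal_inv_of_pos hpow, ENNReal.ofReal_pow (by norm_num)]
      simp
  · intro i hi
    have hf : coarseExpo d s k i = 0 := coarseExpo_eq_zero hd (by omega)
    have hui := lt_of_mem_range_coarseIndex hu i
    rw [hf, pow_zero, Nat.lt_one_iff] at hui
    ext y
    simp [hf, hui, (circleRep_mem y).2]

theorem eventually_preimage_coarseIndex_subset {W : Set Torus} (hW : IsOpen W) {x : Torus}
    (hx : x ∈ W) : ∀ᶠ k in atTop, coarseIndex d s k ⁻¹' {coarseIndex d s k x} ⊆ W := by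
  have hy : ∀ k, ∃ y, coarseIndex d s k y = coarseIndex d s k x ∧
      (y ∈ W → coarseIndex d s k ⁻¹' {coarseIndex d s k x} ⊆ W) := by
    intro k
    by_cases h : coarseIndex d s k ⁻¹' {coarseIndex d s k x} ⊆ W
    · exact ⟨x, rfl, fun _ => h⟩
    · obtain ⟨y, hy, hyW⟩ := Set.not_subset.1 h
      exact ⟨y, hy, fun h => absurd h hyW⟩
  choose y hyx hyW using hy
  have hlim : Tendsto y atTop (𝓝 x) := by
    refine tendsto_pi_nhds.2 fun i => ?_
    have hrep : Tendsto (fun k => circleRep (y k i)) atTop (𝓝 (circleRep (x i))) := by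
      have hz : Tendsto (fun k => (1 / 2 : ℝ) ^ (k - s)) atTop (𝓝 0) :=
        (_root_.tendsto_pow_atTop_nhds_zero_of_lt_one (by norm_num) (by norm_num)).comp
          (tendsto_sub_atTop_nat s)
      rw [tendsto_iff_dist_tendsto_zero]
      refine squeeze_zero' (Eventually.of_forall fun _ => dist_nonneg) ?_ hz
      filter_upwards [eventually_ge_atTop i] with k hk
      have hf : k - s ≤ coarseExpo d s k i := by
        simp only [coarseExpo, hk, if_true]
        split_ifs <;> omega
      have hpow : (0 : ℝ) < 2 ^ coarseExpo d s k i := by positivity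
      have h1 := (Nat.floor_eq_iff (mul_nonneg (circleRep_mem (y k i)).1 hpow.le)).1
        (congrFun (hyx k) i)
      have h2 := (Nat.floor_eq_iff (mul_nonneg (circleRep_mem (x i)).1 hpow.le)).1
        (rfl : coarseIndex d s k x i = coarseIndex d s k x i)
      have h3 : |circleRep (y k i) - circleRep (x i)| * 2 ^ coarseExpo d s k i ≤ 1 := by
        calc _ = |(circleRep (y k i) - circleRep (x i)) * 2 ^ coarseExpo d s k i| := by
              rw [abs_mul, abs_of_pos hpow]
          _ ≤ 1 := by
              rw [sub_mul, abs_le]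
              constructor <;> linarith [h1.1, h1.2, h2.1, h2.2]
      calc dist (circleRep (y k i)) (circleRep (x i))
          = |circleRep (y k i) - circleRep (x i)| := Real.dist_eq ..
        _ ≤ 1 / 2 ^ coarseExpo d s k i := (le_div_iff₀ hpow).2 h3
        _ = (1 / 2) ^ coarseExpo d s k i := by rw [one_div_pow]
        _ ≤ (1 / 2) ^ (k - s) := pow_le_pow_of_le_one (by norm_num) (by norm_num) hf
    have := ((AddCircle.continuous_mk' (1 : ℝ)).tendsto (circleRep (x i))).comp hrep
    have hcx : ((circleRep (x i) : ℝ) : 𝕋) = x i := coe_circleRep _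
    change Tendsto (fun k => ((circleRep (y k i) : ℝ) : 𝕋)) atTop
      (𝓝 ((circleRep (x i) : ℝ) : 𝕋)) at this
    simpa only [coe_circleRep] using this
  filter_upwards [hlim.eventually (hW.mem_nhds hx)] with k hk using hyW k hk

/-- The union of the configuration at position `j` in the coarse rectangle with indices `u`. -/
def piece (ε : ℝ) (d s k : ℕ) (u : ℕ → ℕ) (j : ℕ) : Set Torus :=
  ⋃₀ configFamily ε d (expo (k ^ 2 + k)) (pieceIndex d s u j)

theorem pieceIndex_add_two_le (hs : s ≤ k) {u : ℕ → ℕ}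
    (hu : u ∈ Set.range (coarseIndex d s k)) {j : ℕ} (hj : 2 * j + 2 ≤ 2 ^ s) {i : ℕ} (hi : i < d) :
    pieceIndex d s u j i + 2 ≤ 2 ^ k := by
  have h := lt_of_mem_range_coarseIndex hu i
  simp only [coarseExpo, hi, if_true] at h
  have hk : 2 ^ k = 2 ^ s * 2 ^ (k - s) := by rw [← pow_add]; congr 1; omega
  have h' : 2 ^ s * (u i + 1) ≤ 2 ^ s * 2 ^ (k - s) := Nat.mul_le_mul_left _ h
  simp only [pieceIndex, hi, if_true]
  rw [hk]
  split_ifs <;> linarith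

theorem expo_level (hd : d ≤ k) (hk : 0 < k) {i : ℕ} (hi : i < d) : expo (k ^ 2 + k) i = k := by
  rw [expo_sq_add_self hk, if_pos (by omega)]

theorem coarseExpo_eq_expo (hk : 0 < k) {i : ℕ} (hi : ¬ i < d) :
    coarseExpo d s k i = expo (k ^ 2 + k) i := by
  rw [expo_sq_add_self hk, coarseExpo, if_neg hi]

theorem pieceIndex_lt (hd : d ≤ k) (hk : 0 < k) (hs : s ≤ k) {u : ℕ → ℕ}
    (hu : u ∈ Set.range (coarseIndex d s k)) {j : ℕ} (hj : 2 * j + 2 ≤ 2 ^ s) (i : ℕ) :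
    pieceIndex d s u j i < 2 ^ expo (k ^ 2 + k) i := by
  by_cases hi : i < d
  · have := pieceIndex_add_two_le hs hu hj hi
    rw [expo_level hd hk hi]
    omega
  · rw [← coarseExpo_eq_expo (s := s) hk hi, pieceIndex, if_neg hi]
    exact lt_of_mem_range_coarseIndex hu i

theorem circleRep_mul_mem_of_mem_piece {ε : ℝ} (hε : 0 ≤ ε) (hε' : ε ≤ 1) (hd : d ≤ k)
    (hk : 0 < k) (hs : s ≤ k) {u : ℕ → ℕ} (hu : u ∈ Set.range (coarseIndex d s k)) {j : ℕ}
    (hj : 2 * j + 2 ≤ 2 ^ s) {x : Torus} (hx : x ∈ piece ε d s k u j) (i : ℕ) :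
    (pieceIndex d s u j i : ℝ) ≤ circleRep (x i) * 2 ^ expo (k ^ 2 + k) i ∧
      circleRep (x i) * 2 ^ expo (k ^ 2 + k) i <
        pieceIndex d s u j i + (if i < d then 2 else 1) := by
  refine circleRep_mul_mem_of_mem_sUnion_configFamily hε hε' (pieceIndex_lt hd hk hs hu hj)
    (fun i hi => ?_) hx i
  rw [expo_level hd hk hi]
  exact pieceIndex_add_two_le hs hu hj hi

theorem piece_subset {ε : ℝ} (hε : 0 ≤ ε) (hε' : ε ≤ 1) (hd : d ≤ k)
    (hk : 0 < k) (hs : s ≤ k) {u : ℕ → ℕ} (hu : u ∈ Set.range (coarseIndex d s k)) {j : ℕ}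
    (hj : 2 * j + 2 ≤ 2 ^ s) : piece ε d s k u j ⊆ coarseIndex d s k ⁻¹' {u} := by
  intro x hx
  refine funext fun i => ?_
  have h := circleRep_mul_mem_of_mem_piece hε hε' hd hk hs hu hj hx i
  rw [coarseIndex, Nat.floor_eq_iff (mul_nonneg (circleRep_mem (x i)).1 (by positivity))]
  by_cases hi : i < d
  · have hkpow : (2 : ℝ) ^ k = 2 ^ (k - s) * 2 ^ s := by rw [← pow_add]; congr 1; omega
    have hpow : (0 : ℝ) < 2 ^ s := by positivity
    have hj' : (2 * j + 2 : ℝ) ≤ 2 ^ s := by exact_mod_cast hj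
    have hj0 : (0 : ℝ) ≤ j := j.cast_nonneg
    rw [expo_level hd hk hi, pieceIndex, hkpow, ← mul_assoc] at h
    simp only [hi, if_true] at h
    rw [coarseExpo, if_pos hi]
    set r := circleRep (x i) * 2 ^ (k - s)
    push_cast at h
    constructor
    · refine le_of_mul_le_mul_right ?_ hpow
      split_ifs at h <;> linarith [h.1]
    · refine lt_of_mul_lt_mul_right ?_ hpow.le
      split_ifs at h <;> linarith [h.2]
  · rw [coarseExpo_eq_expo hk hi]
    simpa [pieceIndex, hi] using h

theorem disjoint_piece {ε : ℝ} (hε : 0 ≤ ε) (hε' : ε ≤ 1) (hd0 : 0 < d) (hd : d ≤ k)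
    (hk : 0 < k) (hs : s ≤ k) {u : ℕ → ℕ} (hu : u ∈ Set.range (coarseIndex d s k)) {i j : ℕ}
    (hi : 2 * i + 2 ≤ 2 ^ s) (hj : 2 * j + 2 ≤ 2 ^ s) (hij : i ≠ j) :
    Disjoint (piece ε d s k u i) (piece ε d s k u j) := by
  refine Set.disjoint_left.2 fun x hxi hxj => hij ?_
  have h1 := circleRep_mul_mem_of_mem_piece hε hε' hd hk hs hu hi hxi 0
  have h2 := circleRep_mul_mem_of_mem_piece hε hε' hd hk hs hu hj hxj 0
  simp only [pieceIndex, hd0, if_true] at h1 h2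
  have h3 := h1.1.trans_lt h2.2
  have h4 := h2.1.trans_lt h1.2
  norm_cast at h3 h4
  omega

theorem finite_expo_ne_zero (hk : 0 < k) : {i | expo (k ^ 2 + k) i ≠ 0}.Finite := by
  refine (Set.finite_Iic k).subset fun i hi => ?_
  by_contra h
  rw [Set.mem_Iic] at h
  exact hi (by rw [expo_sq_add_self hk, if_neg h])

theorem μT_dyadicCell_pieceIndex (hd : d ≤ k) (hk : 0 < k) (hs : s ≤ k) {u : ℕ → ℕ}
    (hu : u ∈ Set.range (coarseIndex d s k)) {j : ℕ} (hj : 2 * j + 2 ≤ 2 ^ s) :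
    μT (dyadicCell (expo (k ^ 2 + k)) (pieceIndex d s u j)) =
      ∏ i ∈ Finset.range (k + 1), (2⁻¹ : ℝ≥0∞) ^ expo (k ^ 2 + k) i := by
  refine μT_dyadicCell (fun i => ?_) (pieceIndex_lt hd hk hs hu hj)
  rw [expo_sq_add_self hk]
  split_ifs <;> omega

theorem prod_expo_level (hk : 0 < k) :
    ∏ i ∈ Finset.range (k + 1), (2⁻¹ : ℝ≥0∞) ^ expo (k ^ 2 + k) i = 2⁻¹ ^ (k * (k + 1)) := by
  rw [Finset.prod_congr rfl fun i hi => by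
    rw [expo_sq_add_self hk, if_pos (by have := Finset.mem_range.1 hi; omega)]]
  rw [Finset.prod_const, Finset.card_range, ← pow_mul]

theorem mul_μT_coarse_le_μT_piece {ε : ℝ} (hd : d ≤ k) (hk : 0 < k) (hs : s ≤ k) {u : ℕ → ℕ}
    (hu : u ∈ Set.range (coarseIndex d s k)) {j : ℕ} (hj : 2 * j + 2 ≤ 2 ^ s) :
    (2⁻¹ ^ s) ^ d * μT (coarseIndex d s k ⁻¹' {u}) ≤ μT (piece ε d s k u j) := by
  have hd' : (2⁻¹ ^ s : ℝ≥0∞) ^ d =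
      ∏ i ∈ Finset.range (k + 1), if i < d then (2⁻¹ ^ s : ℝ≥0∞) else 1 := by
    rw [Finset.prod_ite, Finset.prod_const_one, mul_one, Finset.prod_const]
    congr 1
    rw [show (Finset.range (k + 1)).filter (· < d) = Finset.range d by
      ext i; simp only [Finset.mem_filter, Finset.mem_range]; omega, Finset.card_range]
  calc (2⁻¹ ^ s) ^ d * μT (coarseIndex d s k ⁻¹' {u})
      ≤ (2⁻¹ ^ s) ^ d * ∏ i ∈ Finset.range (k + 1), (2⁻¹ : ℝ≥0∞) ^ coarseExpo d s k i := by
        gcongr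
        exact μT_preimage_coarseIndex_le hd hu
    _ = ∏ i ∈ Finset.range (k + 1), (2⁻¹ : ℝ≥0∞) ^ expo (k ^ 2 + k) i := by
        rw [hd', ← Finset.prod_mul_distrib]
        refine Finset.prod_congr rfl fun i _ => ?_
        by_cases hi : i < d
        · rw [if_pos hi, coarseExpo, if_pos hi, expo_level hd hk hi, ← pow_add]
          congr 1
          omega
        · rw [if_neg hi, one_mul, coarseExpo_eq_expo hk hi]
    _ = μT (dyadicCell (expo (k ^ 2 + k)) (pieceIndex d s u j)) :=
        (μT_dyadicCell_pieceIndex hd hk hs hu hj).symm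
    _ ≤ _ := measure_mono (Set.subset_sUnion_of_mem (Set.mem_insert _ _))

theorem isConfig_configFamily {ε : ℝ} (hd0 : 0 < d) (hd : d ≤ k) (hk : 0 < k) (hs : s ≤ k)
    {u : ℕ → ℕ} (hu : u ∈ Set.range (coarseIndex d s k)) {j : ℕ} (hj : 2 * j + 2 ≤ 2 ^ s) :
    IsConfig ε d (dyadicCell (expo (k ^ 2 + k)) (pieceIndex d s u j))
      (configFamily ε d (expo (k ^ 2 + k)) (pieceIndex d s u j)) := by
  refine ⟨k ^ 2 + k, pieceIndex d s u j, by positivity, pieceIndex_lt hd hk hs hu hj, rfl, ?_,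
    fun i hi => by rw [expo_level hd hk hi]; exact hk.ne', rfl⟩
  rw [μT_dyadicCell_pieceIndex hd hk hs hu hj, prod_expo_level hk]
  refine pow_le_pow_of_le_one zero_le (by simp) ?_
  obtain ⟨l, rfl⟩ : ∃ l, d = l + 1 := ⟨d - 1, by omega⟩
  rw [Nat.add_sub_cancel]
  nlinarith

end Levels

/-- **Theorem (statement 11, Lemma L1).** Fix `d ∈ ℕ`, `ε ∈ (0,1/2]`, `m ∈ ℕ`, and a rectangle
`U ⊆ 𝕋^ω`. Then `U` can be covered, up to a set of measure zero, by a family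
`{Eₙ : n ∈ ℕ}` of pairwise disjoint sets `Eₙ = ⋃_{Q ∈ 𝒮ₙ} Q` for some `(ε,d)`-configurations
`𝒮ₙ`, in such a way that `|E_{n₁}| = |E_{n₂}|` whenever `n₁` and `n₂` lie in the same
consecutive block of `2^m` indices. -/
theorem statement11 (d : ℕ) (hd : 0 < d) (ε : ℝ) (hε : 0 < ε) (hε' : ε ≤ 1 / 2)
    (m : ℕ) (hm : 0 < m) (U : Set Torus) (hU : IsRectangle U) :
    ∃ (Q : ℕ → Set Torus) (𝒮 : ℕ → Set (Set Torus)),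
      (∀ n, IsConfig ε d (Q n) (𝒮 n)) ∧
      (Pairwise fun n₁ n₂ => Disjoint (⋃₀ 𝒮 n₁) (⋃₀ 𝒮 n₂)) ∧
      μT (U \ ⋃ n, ⋃₀ 𝒮 n) = 0 ∧
      ∀ n₁ n₂, n₁ / 2 ^ m = n₂ / 2 ^ m → μT (⋃₀ 𝒮 n₁) = μT (⋃₀ 𝒮 n₂) := by
  set s := m + 2 with hs
  have hspow : 2 * 2 ^ m + 2 ≤ 2 ^ s := by
    have : 2 ^ s = 4 * 2 ^ m := by rw [hs, pow_add]; ring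
    have := Nat.one_le_two_pow (n := m)
    omega
  have hj : ∀ j ≤ 2 ^ m, 2 * j + 2 ≤ 2 ^ s := fun j hj => by omega
  set L : ℕ → ℕ := fun k => k + (d + s) with hL
  have hdL : ∀ k, d ≤ L k := fun k => by simp only [hL]; omega
  have hkL : ∀ k, 0 < L k := fun k => by simp only [hL]; omega
  have hsL : ∀ k, s ≤ L k := fun k => by simp only [hL]; omega
  have hε1 : ε ≤ 1 := by linarith
  obtain ⟨k, u, hu, hdisj, hcov⟩ := exists_pairwise_disjoint_pieces_ae_cover (μ := μT)
    (cell := fun k => coarseIndex d s (L k)) (E := fun k u j => piece ε d s (L k) u j)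
    (M := 2 ^ m) (c := (2⁻¹ ^ s) ^ d)
    (fun k => finite_range_coarseIndex (hdL k))
    (fun k u => measurableSet_preimage_coarseIndex u)
    (fun W hW x hx => (tendsto_add_atTop_nat (d + s)).eventually
      (eventually_preimage_coarseIndex_subset hW hx))
    (by positivity) (by simp)
    (fun k u _ j _ => isOpen_sUnion_configFamily (finite_expo_ne_zero (hkL k)) _)
    (fun k u hu j h => piece_subset hε.le hε1 (hdL k) (hkL k) (hsL k) hu (hj j h))
    (fun k u hu i hi j h hij =>
      disjoint_piece hε.le hε1 hd (hdL k) (hkL k) (hsL k) hu (hj i hi) (hj j h) hij)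
    (fun k u hu j h => mul_μT_coarse_le_μT_piece (hdL k) (hkL k) (hsL k) hu (hj j h))
    (fun k u _ j _ => μT_closure_sUnion_configFamily_diff _)
  refine ⟨fun n => dyadicCell (expo (L (k (n / 2 ^ m)) ^ 2 + L (k (n / 2 ^ m))))
    (pieceIndex d s (u (n / 2 ^ m)) (n % 2 ^ m)), fun n => configFamily ε d
    (expo (L (k (n / 2 ^ m)) ^ 2 + L (k (n / 2 ^ m))))
    (pieceIndex d s (u (n / 2 ^ m)) (n % 2 ^ m)), fun n => ?_, hdisj, ?_, fun n₁ n₂ h => ?_⟩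
  · exact isConfig_configFamily hd (hdL _) (hkL _) (hsL _) (hu _)
      (hj _ (Nat.mod_lt _ (by positivity)).le)
  · exact measure_mono_null (fun x hx => hx.2) hcov
  · simp only [h]
    exact μT_sUnion_configFamily_eq _ _
end

section
/- Fix a rectangle U ⊆ T^ω, sequences (d_j)_{j∈ℕ} and (m_j)_{j∈ℕ} of positive integers, and a sequence (ε_j)_{j∈ℕ} with ε_j ∈ (0,1/2]. Then there exists a family 𝒮 = ⋃_{j∈ℕ} ⋃_{n∈ℕ} 𝒮_{j,n} satisfying: (A1) each 𝒮_{j,n} is an (ε_j, d_j)-configuration around some Q_{j,n} ∈ R₀; (A2) for every j ∈ ℕ, the rectangle U is covered, up to a set of measure zero, by the pairwise disjoint sets E_{j,n} := ⋃_{Q ∈ 𝒮_{j,n}} Q, n ∈ ℕ; (A3) for all j₁ < j₂ and n₁, n₂ ∈ ℕ, if Q₁ ∈ 𝒮_{j₁,n₁} and Q₂ ∈ 𝒮_{j₂,n₂}, then Q₁ ∩ Q₂ = ∅ or Q₂ ⊆ Q₁; (A4) there exist subsets Λ_j ⊆ ℕ such that, setting F_j* := ⋃_{n∈Λ_j} E_{j,n},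 the sets F_j* are mutually independent events of probability 2^{-m_j} with respect to the uniform probability measure on U, that is, |⋂_{j∈J} F_j*| = |U| ∏_{j∈J} 2^{-m_j} for every finite nonempty J ⊆ ℕ. -/
open MeasureTheory Filter Metric Topology ENNReal

namespace RubioDeFrancia

/-- The open arc of the torus with endpoints `a` and `b`. -/
def arc (a b : ℝ) : Set 𝕋 := ((↑) : ℝ → 𝕋) '' Set.Ioo a b

lemma isOpen_arc (a b : ℝ) : IsOpen (arc a b) :=
  QuotientAddGroup.isOpenMap_coe _ isOpen_Ioo

lemma isPreconnected_arc (a b : ℝ) : IsPreconnected (arc a b) :=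
  isPreconnected_Ioo.image _ (AddCircle.continuous_mk' (1 : ℝ)).continuousOn

instance : IsProbabilityMeasure (volume : Measure 𝕋) :=
  ⟨by rw [AddCircle.measure_univ, ENNReal.ofReal_one]⟩

lemma volume_image_coe {s : Set ℝ} {a : ℝ} (hs : s ⊆ Set.Ioc a (a + 1))
    (hm : MeasurableSet (((↑) : ℝ → 𝕋) '' s)) :
    volume (((↑) : ℝ → 𝕋) '' s) = volume s := by
  have h := (AddCircle.measurePreserving_mk (1 : ℝ) a).measure_preimage hm.nullMeasurableSet
  rw [← h, Measure.restrict_apply' measurableSet_Ioc]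
  congr 1
  ext x
  constructor
  · rintro ⟨⟨y, hy, hyx⟩, hx⟩
    have : y = x := (AddCircle.coe_eq_coe_iff_of_mem_Ioc (hs hy) hx).1 hyx
    exact this ▸ hy
  · intro hx
    exact ⟨⟨x, hx, rfl⟩, hs hx⟩

lemma volume_arc {a b : ℝ} (h : b ≤ a + 1) : volume (arc a b) = ENNReal.ofReal (b - a) := by
  rw [arc, volume_image_coe (a := a) (fun x hx => ⟨hx.1, hx.2.le.trans h⟩)
    (isOpen_arc a b).measurableSet, Real.volume_Ioo]

lemma volume_singleton_coe (x : 𝕋) : volume ({x} : Set 𝕋) = 0 := by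
  obtain ⟨y, rfl⟩ := QuotientAddGroup.mk_surjective x
  have := volume_image_coe (s := {y}) (a := y - 1) (by simp)
    (by simp)
  simpa using this

lemma volume_eq_zero_of_countable {s : Set 𝕋} (hs : s.Countable) : volume s = 0 := by
  rw [← Set.biUnion_of_singleton s]
  exact (measure_biUnion_null_iff hs).2 fun x _ => volume_singleton_coe x

lemma diff_interior_arc_countable {J : Set ℝ} (hJ : J.OrdConnected) :
    (((↑) : ℝ → 𝕋) '' J \ interior (((↑) : ℝ → 𝕋) '' J)).Countable := by
  have hc : (J \ interior J).Countable := by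
    have hl : {y | IsLeast J y}.Countable :=
      Set.Subsingleton.countable fun x hx y hy => hx.unique hy
    have hg : {y | IsGreatest J y}.Countable :=
      Set.Subsingleton.countable fun x hx y hy => hx.unique hy
    refine (hl.union hg).mono ?_
    rintro y ⟨hy, hy'⟩
    by_contra hcon
    simp only [Set.mem_union, Set.mem_ofPred_eq, IsLeast, IsGreatest, hy, true_and, not_or,
      mem_lowerBounds, mem_upperBounds, not_forall, not_le] at hcon
    obtain ⟨⟨a, ha, hay⟩, b, hb, hyb⟩ := hcon
    exact hy' (mem_interior_iff_mem_nhds.2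
      (mem_of_superset (Icc_mem_nhds hay hyb) (hJ.out ha hb)))
  refine (hc.image ((↑) : ℝ → 𝕋)).mono ?_
  rintro _ ⟨⟨y, hy, rfl⟩, hx⟩
  refine ⟨y, ⟨hy, fun hy' => hx ?_⟩, rfl⟩
  have : ((↑) : ℝ → 𝕋) '' interior J ⊆ interior (((↑) : ℝ → 𝕋) '' J) :=
    interior_maximal (Set.image_mono interior_subset)
      (QuotientAddGroup.isOpenMap_coe _ isOpen_interior)
  exact this ⟨y, hy', rfl⟩

lemma frontier_arc_countable (a b : ℝ) : (frontier (arc a b)).Countable := by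
  refine Set.Countable.mono (s₂ := ((↑) : ℝ → 𝕋) '' {a, b}) ?_
    ((Set.toFinite _).image _).countable
  rw [(isOpen_arc a b).frontier_eq]
  rintro x ⟨hx, hx'⟩
  have hcl : IsClosed (((↑) : ℝ → 𝕋) '' Set.Icc a b) :=
    (isCompact_Icc.image (AddCircle.continuous_mk' (1 : ℝ))).isClosed
  obtain ⟨y, hy, rfl⟩ := closure_minimal (Set.image_mono Set.Ioo_subset_Icc_self) hcl hx
  refine ⟨y, ?_, rfl⟩
  by_contra hne
  simp only [Set.mem_insert_iff, Set.mem_singleton_iff, not_or] at hne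
  exact hx' ⟨y, ⟨lt_of_le_of_ne hy.1 (Ne.symm hne.1), lt_of_le_of_ne hy.2 hne.2⟩, rfl⟩

lemma μT_eq : μT = Measure.infinitePi fun _ : ℕ => (volume : Measure 𝕋) := by
  set ν := Measure.infinitePi fun _ : ℕ => (volume : Measure 𝕋) with hν
  have : ν.IsAddLeftInvariant := by
    refine ⟨fun g => ?_⟩
    have h := Measure.infinitePi_map_pi (fun _ : ℕ => (volume : Measure 𝕋))
      (f := fun i x => g i + x) (fun i => measurable_const_add (g i))
    simp only [map_add_left_eq_self] at h
    exact h
  have h := Measure.addHaarMeasure_unique ν (⊤ : TopologicalSpace.PositiveCompacts Torus)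
  have h1 : ν ((⊤ : TopologicalSpace.PositiveCompacts Torus) : Set Torus) = 1 := by
    simp
  rw [h1, one_smul] at h
  exact h.symm

instance : IsProbabilityMeasure μT := by
  rw [μT_eq]; infer_instance

lemma μT_preimage_eval (i : ℕ) {s : Set 𝕋} (hs : MeasurableSet s) :
    μT {x | x i ∈ s} = volume s := by
  rw [μT_eq]
  exact (measurePreserving_eval_infinitePi (fun _ : ℕ => (volume : Measure 𝕋)) i).measure_preimage
    hs.nullMeasurableSet

lemma μT_preimage_eval_countable (i : ℕ) {s : Set 𝕋} (hs : s.Countable) :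
    μT {x | x i ∈ s} = 0 := by
  rw [μT_preimage_eval i hs.measurableSet, volume_eq_zero_of_countable hs]

lemma shiftedCell_eq (e t : ℕ → ℕ) (c : ℕ → ℝ) :
    shiftedCell e t c = Set.univ.pi fun i =>
      if e i = 0 then Set.univ else arc ((t i + c i) / 2 ^ e i) ((t i + 1 + c i) / 2 ^ e i) := rfl

lemma shiftedCell_eq_finite {e : ℕ → ℕ} {N : ℕ} (he : ∀ i, N ≤ i → e i = 0) (t : ℕ → ℕ)
    (c : ℕ → ℝ) :
    shiftedCell e t c = (Finset.range N : Set ℕ).pi fun i =>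
      if e i = 0 then Set.univ else arc ((t i + c i) / 2 ^ e i) ((t i + 1 + c i) / 2 ^ e i) := by
  rw [shiftedCell_eq]
  ext x
  simp only [Set.mem_pi, Set.mem_univ, true_imp_iff, Finset.coe_range, Set.mem_Iio]
  refine ⟨fun h i _ => h i, fun h i => ?_⟩
  by_cases hi : i < N
  · exact h i hi
  · simp [he i (not_lt.1 hi)]

lemma isOpen_side (e : ℕ) (a b : ℝ) : IsOpen (if e = 0 then Set.univ else arc a b) := by
  split_ifs
  exacts [isOpen_univ, isOpen_arc a b]

lemma isOpen_shiftedCell {e : ℕ → ℕ} {N : ℕ} (he : ∀ i, N ≤ i → e i = 0) (t : ℕ → ℕ)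
    (c : ℕ → ℝ) : IsOpen (shiftedCell e t c) := by
  rw [shiftedCell_eq_finite he]
  exact isOpen_set_pi (Finset.finite_toSet _) fun i _ => isOpen_side _ _ _

lemma isPreconnected_shiftedCell (e t : ℕ → ℕ) (c : ℕ → ℝ) :
    IsPreconnected (shiftedCell e t c) := by
  rw [shiftedCell_eq]
  refine isPreconnected_univ_pi fun i => ?_
  split_ifs
  exacts [isPreconnected_univ, isPreconnected_arc _ _]

lemma μT_frontier_shiftedCell {e : ℕ → ℕ} {N : ℕ} (he : ∀ i, N ≤ i → e i = 0) (t : ℕ → ℕ)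
    (c : ℕ → ℝ) : μT (frontier (shiftedCell e t c)) = 0 := by
  rw [(isOpen_shiftedCell he t c).frontier_eq]
  refine measure_mono_null (t := ⋃ i, {x : Torus | x i ∈ frontier (if e i = 0 then Set.univ else
    arc ((t i + c i) / 2 ^ e i) ((t i + 1 + c i) / 2 ^ e i))}) ?_ (measure_iUnion_null fun i => ?_)
  · rintro x ⟨hx, hx'⟩
    rw [shiftedCell_eq] at hx hx'
    rw [closure_pi_set] at hx
    simp only [Set.mem_pi, Set.mem_univ, true_imp_iff, not_forall] at hx hx'
    obtain ⟨i, hi⟩ := hx'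
    refine Set.mem_iUnion.2 ⟨i, ?_⟩
    rw [Set.mem_ofPred_eq, (isOpen_side _ _ _).frontier_eq]
    exact ⟨hx i, hi⟩
  · apply μT_preimage_eval_countable
    split_ifs
    · simp
    · exact frontier_arc_countable _ _

lemma μT_shiftedCell {e : ℕ → ℕ} {N : ℕ} (he : ∀ i, N ≤ i → e i = 0) (t : ℕ → ℕ)
    (c : ℕ → ℝ) : μT (shiftedCell e t c) = 2⁻¹ ^ ∑ i ∈ Finset.range N, e i := by
  rw [shiftedCell_eq_finite he, μT_eq, Measure.infinitePi_pi _
    (fun i _ => (isOpen_side _ _ _).measurableSet), ← Finset.prod_pow_eq_pow_sum]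
  refine Finset.prod_congr rfl fun i _ => ?_
  split_ifs with h
  · simp [h]
  · have h2 : (1 : ℝ) ≤ 2 ^ e i := one_le_pow₀ (by norm_num)
    have h3 : ((t i : ℝ) + 1 + c i) / 2 ^ e i - (t i + c i) / 2 ^ e i = (2⁻¹) ^ e i := by
      field_simp
      have h5 : ((2 : ℝ) * (1 / 2)) ^ e i = 1 := by norm_num
      rw [← mul_pow, h5]
      ring
    have h4 : (2⁻¹ : ℝ) ^ e i ≤ 1 := pow_le_one₀ (by norm_num) (by norm_num)
    rw [volume_arc (by linarith), h3, ENNReal.ofReal_pow (by norm_num),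
      ENNReal.ofReal_inv_of_pos (by norm_num)]
    simp

lemma expo_eventually (m : ℕ) : ∀ i, kOf m + 2 ≤ i → expo m i = 0 := by
  intro i hi
  simp only [expo]
  split_ifs <;> omega

/-- At the levels `m = k ^ 2 + k` the cells of the basis are cubes. -/
lemma expo_sq_add {k : ℕ} (hk : 0 < k) (i : ℕ) :
    expo (k ^ 2 + k) i = if i ≤ k then k else 0 := by
  obtain ⟨l, rfl⟩ : ∃ l, k = l + 1 := ⟨k - 1, by omega⟩
  have hkOf : kOf ((l + 1) ^ 2 + (l + 1)) = l := by
    rw [kOf, Nat.find_eq_iff]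
    refine ⟨le_rfl, fun n hn => ?_⟩
    have : n + 1 ≤ l := hn
    nlinarith
  simp only [expo, hkOf]
  have : (l + 1) ^ 2 + (l + 1) - (l ^ 2 + l) = 2 * l + 2 := by
    have : (l + 1) ^ 2 + (l + 1) = (l ^ 2 + l) + (2 * l + 2) := by ring
    omega
  rw [this]
  split_ifs <;> omega

namespace Config

variable {ε : ℝ} {d : ℕ} {Q₀ : Set Torus} {𝒮 : Set (Set Torus)}

lemma exists_eq (h : IsConfig ε d Q₀ 𝒮) {Q : Set Torus} (hQ : Q ∈ 𝒮) :
    ∃ e t c N, (∀ i, N ≤ i → e i = 0) ∧ Q = shiftedCell e t c := by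
  obtain ⟨m, t, -, -, rfl, -, -, rfl⟩ := h
  obtain rfl | ⟨i, -, rfl⟩ := hQ
  · exact ⟨_, _, _, _, expo_eventually m, rfl⟩
  · exact ⟨_, _, _, _, expo_eventually m, rfl⟩

lemma isOpen_mem (h : IsConfig ε d Q₀ 𝒮) {Q : Set Torus} (hQ : Q ∈ 𝒮) : IsOpen Q := by
  obtain ⟨e, t, c, N, he, rfl⟩ := exists_eq h hQ
  exact isOpen_shiftedCell he t c

lemma isPreconnected_mem (h : IsConfig ε d Q₀ 𝒮) {Q : Set Torus} (hQ : Q ∈ 𝒮) :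
    IsPreconnected Q := by
  obtain ⟨e, t, c, N, he, rfl⟩ := exists_eq h hQ
  exact isPreconnected_shiftedCell e t c

lemma μT_frontier_mem (h : IsConfig ε d Q₀ 𝒮) {Q : Set Torus} (hQ : Q ∈ 𝒮) :
    μT (frontier Q) = 0 := by
  obtain ⟨e, t, c, N, he, rfl⟩ := exists_eq h hQ
  exact μT_frontier_shiftedCell he t c

lemma μT_mem_ne_zero (h : IsConfig ε d Q₀ 𝒮) {Q : Set Torus} (hQ : Q ∈ 𝒮) : μT Q ≠ 0 := by
  obtain ⟨e, t, c, N, he, rfl⟩ := exists_eq h hQ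
  rw [μT_shiftedCell he]
  exact pow_ne_zero _ (by simp)

lemma self_mem (h : IsConfig ε d Q₀ 𝒮) : Q₀ ∈ 𝒮 := by
  obtain ⟨m, t, -, -, rfl, -, -, rfl⟩ := h
  exact Set.mem_insert _ _

lemma finite (h : IsConfig ε d Q₀ 𝒮) : 𝒮.Finite := by
  obtain ⟨m, t, -, -, rfl, -, -, rfl⟩ := h
  refine Set.Finite.insert _ (((Set.finite_lt_nat d).image fun i =>
    shiftedCell (expo m) t fun j => if j = i then 1 - ε else 0).subset ?_)
  rintro _ ⟨i, hi, rfl⟩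
  exact ⟨i, hi, rfl⟩

lemma isOpen_sUnion (h : IsConfig ε d Q₀ 𝒮) : IsOpen (⋃₀ 𝒮) :=
  _root_.isOpen_sUnion fun _ hQ => isOpen_mem h hQ

lemma sUnion_nonempty (h : IsConfig ε d Q₀ 𝒮) : (⋃₀ 𝒮).Nonempty := by
  have h0 := nonempty_of_measure_ne_zero (μT_mem_ne_zero h (self_mem h))
  exact h0.mono (Set.subset_sUnion_of_mem (self_mem h))

end Config

lemma exists_arc_inter_eq (G : Set Torus) {θ : ℝ≥0∞} (hθ : θ ≤ 1) :
    ∃ b, μT (G ∩ {x | x 0 ∈ arc 0 b}) = θ * μT G := by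
  set f : ℝ → ℝ := fun b => (μT (G ∩ {x | x 0 ∈ arc 0 b})).toReal with hf
  have hstep : ∀ a b, a ≤ b → b ≤ a + 1 / 2 → μT (G ∩ {x | x 0 ∈ arc 0 b}) ≤
      μT (G ∩ {x | x 0 ∈ arc 0 a}) + ENNReal.ofReal (b - a) := by
    intro a b hab hba
    have hsub : G ∩ {x | x 0 ∈ arc 0 b} ⊆ ((G ∩ {x | x 0 ∈ arc 0 a}) ∪ {x | x 0 ∈ arc a b}) ∪
        {x : Torus | x 0 ∈ ({(a : 𝕋)} : Set 𝕋)} := by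
      rintro x ⟨hxG, y, hy, hyx⟩
      rcases lt_trichotomy y a with h | rfl | h
      · exact Or.inl (Or.inl ⟨hxG, y, ⟨hy.1, h⟩, hyx⟩)
      · exact Or.inr hyx.symm
      · exact Or.inl (Or.inr ⟨y, ⟨h, hy.2⟩, hyx⟩)
    refine (measure_mono hsub).trans ((measure_union_le _ _).trans ?_)
    rw [μT_preimage_eval_countable 0 (Set.countable_singleton _), add_zero]
    refine (measure_union_le _ _).trans ?_
    rw [μT_preimage_eval 0 (isOpen_arc a b).measurableSet, volume_arc (by linarith)]
  have hmono : Monotone f := by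
    intro a b hab
    refine ENNReal.toReal_mono (measure_ne_top _ _) (measure_mono ?_)
    rintro x ⟨hxG, y, hy, hyx⟩
    exact ⟨hxG, y, ⟨hy.1, hy.2.trans_le hab⟩, hyx⟩
  have hlip : ∀ a b, a ≤ b → b ≤ a + 1 / 2 → f b ≤ f a + (b - a) := by
    intro a b hab hba
    have h := ENNReal.toReal_mono (by finiteness) (hstep a b hab hba)
    rwa [ENNReal.toReal_add (by finiteness) (by finiteness),
      ENNReal.toReal_ofReal (by linarith)] at h
  have hcont : Continuous f := by
    rw [Metric.continuous_iff]
    intro b δ hδ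
    refine ⟨min δ (1 / 2), lt_min hδ (by norm_num), fun a hab => ?_⟩
    rw [Real.dist_eq, lt_min_iff, abs_lt, abs_lt] at hab
    rw [Real.dist_eq, abs_lt]
    obtain ⟨⟨h1, h2⟩, h3, h4⟩ := hab
    rcases le_total a b with h | h
    · have := hmono h
      have := hlip a b h (by linarith)
      constructor <;> linarith
    · have := hmono h
      have := hlip b a h (by linarith)
      constructor <;> linarith
  have h0 : f 0 = 0 := by
    have : arc 0 0 = ∅ := by rw [arc, Set.Ioo_self, Set.image_empty]
    simp [hf, this]
  have h1 : f 1 = (μT G).toReal := by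
    have : μT (G ∩ {x | x 0 ∈ arc 0 1}) = μT G := by
      refine le_antisymm (measure_mono Set.inter_subset_left) ?_
      have hsub : G ⊆ (G ∩ {x | x 0 ∈ arc 0 1}) ∪ {x : Torus | x 0 ∈ ({0} : Set 𝕋)} := by
        intro x hx
        obtain ⟨y, hy, hyx⟩ : x 0 ∈ ((↑) : ℝ → 𝕋) '' Set.Ico 0 (0 + 1) := by
          rw [AddCircle.coe_image_Ico_eq]; trivial
        rw [zero_add] at hy
        rcases hy.1.eq_or_lt with rfl | h
        · exact Or.inr (by simpa using hyx.symm)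
        · exact Or.inl ⟨hx, y, ⟨h, hy.2⟩, hyx⟩
      refine (measure_mono hsub).trans ((measure_union_le _ _).trans ?_)
      rw [μT_preimage_eval_countable 0 (Set.countable_singleton _), add_zero]
    simp [hf, this]
  have hmem : (θ * μT G).toReal ∈ Set.Icc (f 0) (f 1) := by
    rw [h0, h1]
    exact ⟨ENNReal.toReal_nonneg, ENNReal.toReal_mono (by finiteness) (mul_le_of_le_one_left' hθ)⟩
  obtain ⟨b, -, hb⟩ := intermediate_value_Icc zero_le_one hcont.continuousOn hmem
  refine ⟨b, (ENNReal.toReal_eq_toReal_iff' (by finiteness) ?_).1 hb⟩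
  exact ENNReal.mul_ne_top (ne_top_of_le_ne_top one_ne_top hθ) (by finiteness)

/-- Any open set splits, up to a null set, into two open pieces in a prescribed proportion. -/
lemma exists_split {G : Set Torus} (hG : IsOpen G) {θ : ℝ≥0∞} (hθ : θ ≤ 1) :
    ∃ G₁ G₂, IsOpen G₁ ∧ IsOpen G₂ ∧ G₁ ⊆ G ∧ G₂ ⊆ G ∧ Disjoint G₁ G₂ ∧
      μT G₁ = θ * μT G ∧ μT (G \ (G₁ ∪ G₂)) = 0 := by
  obtain ⟨b, hb⟩ := exists_arc_inter_eq G hθ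
  have hc : Continuous fun x : Torus => x 0 := continuous_apply 0
  refine ⟨G ∩ {x | x 0 ∈ arc 0 b}, G ∩ {x | x 0 ∈ (closure (arc 0 b))ᶜ},
    hG.inter ((isOpen_arc 0 b).preimage hc), hG.inter (isClosed_closure.isOpen_compl.preimage hc),
    Set.inter_subset_left, Set.inter_subset_left, ?_, hb, ?_⟩
  · rw [Set.disjoint_left]
    rintro x ⟨-, hx⟩ ⟨-, hx'⟩
    exact hx' (subset_closure hx)
  · refine measure_mono_null ?_ (μT_preimage_eval_countable 0 (frontier_arc_countable 0 b))
    rintro x ⟨hx, hx'⟩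
    simp only [Set.mem_union, Set.mem_inter_iff, hx, true_and, not_or] at hx'
    rw [Set.mem_ofPred_eq, (isOpen_arc 0 b).frontier_eq]
    exact ⟨not_not.1 hx'.2, hx'.1⟩

/-- Exponents of the cells obtained from the cubes at level `k ^ 2 + k` by doubling the sides in
the first `d` coordinates. -/
def blockExpo (d k i : ℕ) : ℕ := if i < d then k - 1 else if i ≤ k then k else 0

/-- Translation indices of the lower corner cube of a block. -/
def corner (d : ℕ) (s : ℕ → ℕ) (i : ℕ) : ℕ := if i < d then 2 * s i else s i

/-- The configuration around the lower corner cube of the block with indices `s`. -/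
def blockConfig (ε : ℝ) (d k : ℕ) (s : ℕ → ℕ) : Set (Set Torus) :=
  insert (dyadicCell (expo (k ^ 2 + k)) (corner d s))
    {Q | ∃ i < d, Q = shiftedCell (expo (k ^ 2 + k)) (corner d s)
      fun j => if j = i then 1 - ε else 0}

section Blocks

variable {d k : ℕ} {s : ℕ → ℕ} {ε : ℝ}

lemma expo_eq_blockExpo_add (hd : 0 < d) (hdk : d ≤ k) (i : ℕ) :
    expo (k ^ 2 + k) i = blockExpo d k i + if i < d then 1 else 0 := by
  rw [expo_sq_add (hd.trans_le hdk), blockExpo]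
  split_ifs <;> omega

lemma expo_sq_add_eq_zero (hk : 0 < k) : ∀ i, k + 1 ≤ i → expo (k ^ 2 + k) i = 0 := by
  intro i hi
  rw [expo_sq_add hk, if_neg (by omega)]

lemma blockExpo_eq_zero (hdk : d ≤ k) : ∀ i, k + 1 ≤ i → blockExpo d k i = 0 := by
  intro i hi
  rw [blockExpo, if_neg (by omega), if_neg (by omega)]

lemma isConfig_blockConfig (hd : 0 < d) (hdk : d ≤ k) (hs : ∀ i, s i < 2 ^ blockExpo d k i) :
    IsConfig ε d (dyadicCell (expo (k ^ 2 + k)) (corner d s)) (blockConfig ε d k s) := by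
  have hk := hd.trans_le hdk
  refine ⟨k ^ 2 + k, corner d s, by positivity, fun i => ?_, rfl, ?_, fun i hi => ?_, rfl⟩
  · rw [expo_eq_blockExpo_add hd hdk, corner]
    have := hs i
    split_ifs
    · rw [pow_succ]; omega
    · simpa
  · rw [dyadicCell, μT_shiftedCell (expo_sq_add_eq_zero hk)]
    refine pow_le_pow_right_of_le_one' (by simp) ?_
    have : ∑ i ∈ Finset.range (k + 1), expo (k ^ 2 + k) i = (k + 1) * k := by
      rw [Finset.sum_congr rfl (g := fun _ => k)]
      · simp
      · intro i hi
        rw [expo_sq_add hk, if_pos (by simpa [Nat.lt_succ_iff] using hi)]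
    rw [this]
    obtain ⟨l, rfl⟩ : ∃ l, d = l + 1 := ⟨d - 1, by omega⟩
    simp only [Nat.add_sub_cancel]
    nlinarith
  · rw [expo_sq_add hk, if_pos (by omega)]
    omega

lemma shiftedCell_corner_subset (hd : 0 < d) (hdk : d ≤ k) {c : ℕ → ℝ} (hc0 : ∀ i, 0 ≤ c i)
    (hc1 : ∀ i, c i ≤ 1) (hc : ∀ i, d ≤ i → c i = 0) :
    shiftedCell (expo (k ^ 2 + k)) (corner d s) c ⊆ dyadicCell (blockExpo d k) s := by
  rw [dyadicCell, shiftedCell_eq, shiftedCell_eq]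
  refine Set.pi_mono fun i _ => ?_
  rw [expo_eq_blockExpo_add hd hdk, corner]
  have h2 : (0 : ℝ) < 2 ^ blockExpo d k i := by positivity
  by_cases hi : i < d
  · have := hc0 i
    have := hc1 i
    simp only [hi, if_true, add_eq_zero, one_ne_zero, and_false, if_false]
    split_ifs
    · exact Set.subset_univ _
    · refine Set.image_mono (Set.Ioo_subset_Ioo ?_ ?_)
      · rw [pow_succ, div_le_div_iff₀ (by positivity) (by positivity)]
        push_cast
        nlinarith
      · rw [pow_succ, div_le_div_iff₀ (by positivity) (by positivity)]
        push_cast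
        nlinarith
  · simp [hi, hc i (not_lt.1 hi)]

lemma sUnion_blockConfig_subset (hd : 0 < d) (hdk : d ≤ k) (hε : 0 < ε) (hε' : ε ≤ 1 / 2) :
    ⋃₀ blockConfig ε d k s ⊆ dyadicCell (blockExpo d k) s := by
  refine Set.sUnion_subset ?_
  rintro _ (rfl | ⟨i, hi, rfl⟩)
  · exact shiftedCell_corner_subset hd hdk (by simp) (by simp) (by simp)
  · refine shiftedCell_corner_subset hd hdk (fun j => ?_) (fun j => ?_) fun j hj => ?_
    · split_ifs <;> linarith
    · split_ifs <;> linarith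
    · rw [if_neg (by omega)]

lemma μT_block_le (hd : 0 < d) (hdk : d ≤ k) :
    2⁻¹ ^ d * μT (dyadicCell (blockExpo d k) s) ≤ μT (⋃₀ blockConfig ε d k s) := by
  have hk := hd.trans_le hdk
  refine le_trans (le_of_eq ?_) (measure_mono (Set.subset_sUnion_of_mem (Set.mem_insert _ _)))
  rw [dyadicCell, dyadicCell, μT_shiftedCell (expo_sq_add_eq_zero hk),
    μT_shiftedCell (blockExpo_eq_zero hdk), ← pow_add]
  congr 1
  simp_rw [expo_eq_blockExpo_add hd hdk]
  rw [Finset.sum_add_distrib, add_comm, Finset.sum_boole]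
  congr 1
  have : Finset.filter (· < d) (Finset.range (k + 1)) = Finset.range d := by
    ext i; simp; omega
  simp [this]

lemma disjoint_block {s' : ℕ → ℕ} (hs : ∀ i, s i < 2 ^ blockExpo d k i)
    (hs' : ∀ i, s' i < 2 ^ blockExpo d k i) (hne : s ≠ s') :
    Disjoint (dyadicCell (blockExpo d k) s) (dyadicCell (blockExpo d k) s') := by
  obtain ⟨i, hi⟩ := Function.ne_iff.1 hne
  rw [Set.disjoint_left]
  intro x hx hx'
  have h1 := hx i trivial
  have h2 := hx' i trivial
  have h0 : blockExpo d k i ≠ 0 := by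
    intro h
    have a1 := hs i
    have a2 := hs' i
    rw [h] at a1 a2
    omega
  simp only [h0, if_false, add_zero] at h1 h2
  obtain ⟨y, hy, hyx⟩ := h1
  obtain ⟨z, hz, hzx⟩ := h2
  have hpos : (0 : ℝ) < 2 ^ blockExpo d k i := by positivity
  have hIco : ∀ (a : ℕ) (w : ℝ), a < 2 ^ blockExpo d k i →
      w ∈ Set.Ioo ((a : ℝ) / 2 ^ blockExpo d k i) ((a + 1) / 2 ^ blockExpo d k i) →
      w ∈ Set.Ico (0 : ℝ) (0 + 1) := by
    intro a w ha hw
    refine ⟨le_trans (by positivity) hw.1.le, hw.2.trans_le ?_⟩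
    rw [zero_add, div_le_one hpos]
    exact_mod_cast ha
  have hyz : y = z := (AddCircle.coe_eq_coe_iff_of_mem_Ico (hIco _ _ (hs i) hy)
    (hIco _ _ (hs' i) hz)).1 (hyx.trans hzx.symm)
  subst hyz
  have e1 := (div_lt_iff₀ hpos).1 hy.1
  have e2 := (lt_div_iff₀ hpos).1 hy.2
  have e3 := (div_lt_iff₀ hpos).1 hz.1
  have e4 := (lt_div_iff₀ hpos).1 hz.2
  have e5 : (s i : ℝ) < s' i + 1 := e1.trans e4
  have e6 : (s' i : ℝ) < s i + 1 := e3.trans e2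
  norm_cast at e5 e6
  omega

lemma finite_blockIndex (hdk : d ≤ k) : {s : ℕ → ℕ | ∀ i, s i < 2 ^ blockExpo d k i}.Finite := by
  refine Set.Finite.of_finite_image (f := fun s (i : Fin (k + 1)) => s i) ?_ ?_
  · refine (Set.Finite.pi' fun i : Fin (k + 1) =>
      Set.finite_lt_nat (2 ^ blockExpo d k i)).subset ?_
    rintro _ ⟨s, hs, rfl⟩ i
    exact hs i
  · intro s hs s' hs' h
    funext i
    by_cases hi : i < k + 1
    · exact congrFun h ⟨i, hi⟩
    · have a1 := hs i
      have a2 := hs' i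
      rw [blockExpo_eq_zero hdk i (by omega)] at a1 a2
      omega

end Blocks

/-- The union of the blocks of level `k` that are contained in `G`. -/
def blockUnion (d k : ℕ) (G : Set Torus) : Set Torus :=
  ⋃ s ∈ {s : ℕ → ℕ | (∀ i, s i < 2 ^ blockExpo d k i) ∧ dyadicCell (blockExpo d k) s ⊆ G},
    dyadicCell (blockExpo d k) s

lemma eventually_mem_blockUnion {d : ℕ} {G : Set Torus} (hG : IsOpen G) {x : Torus} (hx : x ∈ G)
    (hxD : ∀ i, x i ∉ Set.range fun q : ℚ => ((q : ℝ) : 𝕋)) :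
    ∀ᶠ k in atTop, x ∈ blockUnion d k G := by
  have hlift : ∀ i, ∃ y ∈ Set.Ico (0 : ℝ) 1, (y : 𝕋) = x i := by
    intro i
    have : x i ∈ ((↑) : ℝ → 𝕋) '' Set.Ico 0 (0 + 1) := by
      rw [AddCircle.coe_image_Ico_eq]; trivial
    simpa using this
  choose y hy hyx using hlift
  have hyq : ∀ i (q : ℚ), (q : ℝ) ≠ y i := fun i q h => hxD i ⟨q, by simp only [h, hyx]⟩
  have hmem : ∀ i e : ℕ, y i ∈ Set.Ioo ((⌊2 ^ e * y i⌋₊ : ℝ) / 2 ^ e)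
      ((⌊2 ^ e * y i⌋₊ + 1 : ℝ) / 2 ^ e) := by
    intro i e
    have hpos : (0 : ℝ) < 2 ^ e := by positivity
    constructor
    · refine lt_of_le_of_ne ?_ ?_
      · rw [div_le_iff₀ hpos, mul_comm (y i)]
        exact Nat.floor_le (mul_nonneg hpos.le (hy i).1)
      · have := hyq i (⌊2 ^ e * y i⌋₊ / 2 ^ e : ℚ)
        push_cast at this
        exact this
    · rw [lt_div_iff₀ hpos, mul_comm (y i)]
      exact Nat.lt_floor_add_one _
  obtain ⟨I, u, hu, hIu⟩ := isOpen_pi_iff.1 hG x hx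
  have hside : ∀ a ∈ I, ∀ᶠ k in atTop, blockExpo d k a ≠ 0 ∧
      arc ((⌊2 ^ blockExpo d k a * y a⌋₊ : ℝ) / 2 ^ blockExpo d k a)
        ((⌊2 ^ blockExpo d k a * y a⌋₊ + 1 : ℝ) / 2 ^ blockExpo d k a) ⊆ u a := by
    intro a ha
    have hop : IsOpen (((↑) : ℝ → 𝕋) ⁻¹' u a) :=
      (hu a ha).1.preimage (AddCircle.continuous_mk' (1 : ℝ))
    obtain ⟨δ, hδ, hball⟩ := Metric.isOpen_iff.1 hop (y a) (by
      rw [Set.mem_preimage, hyx]; exact (hu a ha).2)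
    obtain ⟨n, hn⟩ := exists_pow_lt_of_lt_one hδ (show (1 / 2 : ℝ) < 1 by norm_num)
    filter_upwards [eventually_ge_atTop (n + a + 2)] with k hk
    have hexp : n + 1 ≤ blockExpo d k a := by
      rw [blockExpo]; split_ifs <;> omega
    refine ⟨by omega, ?_⟩
    rintro _ ⟨z, hz, rfl⟩
    refine hball ?_
    have hya := hmem a (blockExpo d k a)
    generalize blockExpo d k a = e at *
    rw [add_div] at hz hya
    have h1 : (1 : ℝ) / 2 ^ e ≤ (1 / 2) ^ n := by
      rw [← one_div_pow]
      exact pow_le_pow_of_le_one (by norm_num) (by norm_num) (by omega)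
    rw [Metric.mem_ball, Real.dist_eq, abs_lt]
    obtain ⟨h2, h3⟩ := hz
    obtain ⟨h4, h5⟩ := hya
    constructor <;> linarith
  filter_upwards [(Filter.eventually_all_finset I).2 hside] with k hk
  refine Set.mem_iUnion₂.2 ⟨fun i => ⌊2 ^ blockExpo d k i * y i⌋₊, ⟨fun i => ?_, ?_⟩, ?_⟩
  · rw [Nat.floor_lt (mul_nonneg (by positivity) (hy i).1)]
    push_cast
    exact mul_lt_of_lt_one_right (by positivity) (hy i).2
  · refine subset_trans ?_ hIu
    intro z hz a ha
    have hza := hz a trivial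
    obtain ⟨h1, h2⟩ := hk a ha
    simp only [h1, if_false, add_zero] at hza
    exact h2 hza
  · intro i _
    dsimp only
    split_ifs with h
    · trivial
    · simp only [add_zero]
      exact ⟨y i, hmem i _, hyx i⟩

lemma exists_blockUnion_ge (d k₀ : ℕ) {G : Set Torus} (hG : IsOpen G) :
    ∃ k, k₀ ≤ k ∧ 2⁻¹ * μT G ≤ μT (blockUnion d k G) := by
  rcases eq_or_ne (μT G) 0 with h0 | h0
  · exact ⟨k₀, le_rfl, by simp [h0]⟩
  set V : ℕ → Set Torus := fun N => ⋂ k ≥ N, blockUnion d k G with hV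
  have hVmono : Monotone V := fun M N hMN =>
    Set.biInter_mono (fun k (hk : N ≤ k) => hMN.trans hk) fun _ _ => subset_rfl
  have hle : μT G ≤ ⨆ N, μT (V N) := by
    rw [← hVmono.measure_iUnion]
    have hsub : G ⊆ (⋃ N, V N) ∪
        ⋃ i, {x : Torus | x i ∈ Set.range fun q : ℚ => ((q : ℝ) : 𝕋)} := by
      intro x hx
      by_cases hxD : ∀ i, x i ∉ Set.range fun q : ℚ => ((q : ℝ) : 𝕋)
      · obtain ⟨N, hN⟩ := eventually_atTop.1 (eventually_mem_blockUnion (d := d) hG hx hxD)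
        exact Or.inl (Set.mem_iUnion.2 ⟨N, Set.mem_iInter₂.2 hN⟩)
      · push Not at hxD
        exact Or.inr (Set.mem_iUnion.2 hxD)
    refine (measure_mono hsub).trans ((measure_union_le _ _).trans ?_)
    rw [measure_iUnion_null fun i => μT_preimage_eval_countable i (Set.countable_range _), add_zero]
  have hlt : 2⁻¹ * μT G < ⨆ N, μT (V N) := by
    refine lt_of_lt_of_le ?_ hle
    rw [mul_comm, ← div_eq_mul_inv]
    exact ENNReal.half_lt_self h0 (measure_ne_top _ _)
  obtain ⟨N, hN⟩ := lt_iSup_iff.1 hlt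
  exact ⟨max N k₀, le_max_right _ _, hN.le.trans
    (measure_mono (Set.biInter_subset_of_mem (le_max_left N k₀ : N ≤ max N k₀)))⟩

/-- Finitely many disjoint configurations fill a fixed proportion of an open set, while leaving
at least half of it uncovered. -/
lemma exists_finite_configs {d : ℕ} (hd : 0 < d) {ε : ℝ} (hε : 0 < ε) (hε' : ε ≤ 1 / 2)
    {G : Set Torus} (hG : IsOpen G) :
    ∃ 𝒞 : Set (Set (Set Torus)), 𝒞.Finite ∧ (∀ S ∈ 𝒞, ∃ Q, IsConfig ε d Q S) ∧
      (∀ S ∈ 𝒞, ⋃₀ S ⊆ G) ∧ 𝒞.PairwiseDisjoint Set.sUnion ∧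
      2⁻¹ ^ (d + 2) * μT G ≤ μT (⋃ S ∈ 𝒞, ⋃₀ S) ∧ μT (⋃ S ∈ 𝒞, ⋃₀ S) ≤ 2⁻¹ * μT G := by
  obtain ⟨G₁, -, hG₁, -, hG₁G, -, -, hμ, -⟩ := exists_split hG (θ := 2⁻¹) (by simp)
  obtain ⟨k, hdk, hk⟩ := exists_blockUnion_ge d d hG₁
  set T : Set (ℕ → ℕ) :=
    {s | (∀ i, s i < 2 ^ blockExpo d k i) ∧ dyadicCell (blockExpo d k) s ⊆ G₁} with hT
  have hTfin : T.Finite := (finite_blockIndex hdk).subset fun s hs => hs.1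
  have hdisj : ∀ s ∈ T, ∀ s' ∈ T, s ≠ s' →
      Disjoint (⋃₀ blockConfig ε d k s) (⋃₀ blockConfig ε d k s') := fun s hs s' hs' hne =>
    (disjoint_block hs.1 hs'.1 hne).mono (sUnion_blockConfig_subset hd hdk hε hε')
      (sUnion_blockConfig_subset hd hdk hε hε')
  have hsub : ∀ s ∈ T, ⋃₀ blockConfig ε d k s ⊆ G₁ := fun s hs =>
    (sUnion_blockConfig_subset hd hdk hε hε').trans hs.2
  refine ⟨blockConfig ε d k '' T, hTfin.image _, ?_, ?_, ?_, ?_, ?_⟩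
  · rintro _ ⟨s, hs, rfl⟩
    exact ⟨_, isConfig_blockConfig hd hdk hs.1⟩
  · rintro _ ⟨s, hs, rfl⟩
    exact (hsub s hs).trans hG₁G
  · rintro _ ⟨s, hs, rfl⟩ _ ⟨s', hs', rfl⟩ hne
    exact hdisj s hs s' hs' fun h => hne (h ▸ rfl)
  · rw [Set.biUnion_image]
    have hsum : μT (⋃ s ∈ T, ⋃₀ blockConfig ε d k s) =
        ∑ s ∈ hTfin.toFinset, μT (⋃₀ blockConfig ε d k s) := by
      rw [← measure_biUnion_finset]
      · simp
      · intro s hs s' hs' hne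
        exact hdisj s (by simpa using hs) s' (by simpa using hs') hne
      · intro s hs
        exact (Config.isOpen_sUnion (isConfig_blockConfig hd hdk
          ((hTfin.mem_toFinset.1 hs).1))).measurableSet
    have hW : μT (blockUnion d k G₁) ≤
        ∑ s ∈ hTfin.toFinset, μT (dyadicCell (blockExpo d k) s) := by
      refine le_trans (le_of_eq ?_) (measure_biUnion_finset_le _ _)
      congr 1
      ext x
      simp [blockUnion, hT]
    calc 2⁻¹ ^ (d + 2) * μT G = 2⁻¹ ^ d * (2⁻¹ * μT G₁) := by rw [hμ]; ring
      _ ≤ 2⁻¹ ^ d * ∑ s ∈ hTfin.toFinset, μT (dyadicCell (blockExpo d k) s) := by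
        gcongr
        exact hk.trans hW
      _ ≤ _ := by
        rw [hsum, Finset.mul_sum]
        exact Finset.sum_le_sum fun s _ => μT_block_le hd hdk
  · rw [Set.biUnion_image, ← hμ]
    exact measure_mono (Set.iUnion₂_subset hsub)

/-- Any open set is covered, up to a null set, by countably many disjoint configurations. -/
lemma exists_countable_configs {d : ℕ} (hd : 0 < d) {ε : ℝ} (hε : 0 < ε) (hε' : ε ≤ 1 / 2)
    {G : Set Torus} (hG : IsOpen G) :
    ∃ 𝒞 : Set (Set (Set Torus)), 𝒞.Countable ∧ (μT G ≠ 0 → 𝒞.Infinite) ∧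
      (∀ S ∈ 𝒞, ∃ Q, IsConfig ε d Q S) ∧
      (∀ S ∈ 𝒞, ⋃₀ S ⊆ G) ∧ 𝒞.PairwiseDisjoint Set.sUnion ∧
      μT (G \ ⋃ S ∈ 𝒞, ⋃₀ S) = 0 := by
  choose 𝒞 hfin hconf hsub hdisj hge hle using
    fun P : TopologicalSpace.Opens Torus => exists_finite_configs hd hε hε' P.2
  let next : TopologicalSpace.Opens Torus → TopologicalSpace.Opens Torus := fun P =>
    ⟨(P : Set Torus) \ closure (⋃ S ∈ 𝒞 P, ⋃₀ S), P.2.sdiff isClosed_closure⟩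
  let P : ℕ → TopologicalSpace.Opens Torus := fun n => next^[n] ⟨G, hG⟩
  have hP0 : (P 0 : Set Torus) = G := rfl
  have hPs : ∀ n, (P (n + 1) : Set Torus) =
      (P n : Set Torus) \ closure (⋃ S ∈ 𝒞 (P n), ⋃₀ S) := by
    intro n
    simp only [P, Function.iterate_succ_apply']
    rfl
  have hanti : Antitone fun n => (P n : Set Torus) := by
    refine antitone_nat_of_succ_le fun n => ?_
    rw [hPs]
    exact Set.sdiff_subset
  set E : ℕ → Set Torus := fun n => ⋃ S ∈ 𝒞 (P n), ⋃₀ S with hE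
  have hEP : ∀ n, E n ⊆ P n := fun n => Set.iUnion₂_subset (hsub (P n))
  have hEopen : ∀ n, IsOpen (E n) := fun n => isOpen_biUnion fun S hS =>
    Config.isOpen_sUnion (hconf (P n) S hS).choose_spec
  have hPE : ∀ a b, a < b → Disjoint (P b : Set Torus) (E a) := by
    intro a b hab
    have h1 : (P b : Set Torus) ⊆ P (a + 1) := hanti hab
    rw [hPs] at h1
    exact Set.disjoint_left.2 fun x hx hx' => (h1 hx).2 (subset_closure hx')
  have hnull : ∀ n, μT (closure (E n) \ E n) = 0 := by
    intro n
    refine measure_mono_null (t := ⋃ S ∈ 𝒞 (P n), ⋃ Q ∈ S, frontier Q) ?_ ?_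
    · rintro x ⟨hx, hx'⟩
      rw [hE, (hfin (P n)).closure_biUnion] at hx
      obtain ⟨S, hS, hxS⟩ := Set.mem_iUnion₂.1 hx
      obtain ⟨Q₀, hQ₀⟩ := hconf (P n) S hS
      rw [Set.sUnion_eq_biUnion, (Config.finite hQ₀).closure_biUnion] at hxS
      obtain ⟨Q, hQ, hxQ⟩ := Set.mem_iUnion₂.1 hxS
      refine Set.mem_iUnion₂.2 ⟨S, hS, Set.mem_iUnion₂.2 ⟨Q, hQ, ?_⟩⟩
      rw [(Config.isOpen_mem hQ₀ hQ).frontier_eq]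
      exact ⟨hxQ, fun h => hx' (Set.mem_iUnion₂.2 ⟨S, hS, Q, hQ, h⟩)⟩
    · refine (measure_biUnion_null_iff (hfin (P n)).countable).2 fun S hS => ?_
      obtain ⟨Q₀, hQ₀⟩ := hconf (P n) S hS
      exact (measure_biUnion_null_iff (Config.finite hQ₀).countable).2 fun Q hQ =>
        Config.μT_frontier_mem hQ₀ hQ
  have hEdisj : Pairwise fun a b => Disjoint (E a) (E b) := by
    intro a b hab
    rcases lt_or_gt_of_ne hab with h | h
    · exact ((hPE a b h).mono_left (hEP b)).symm
    · exact (hPE b a h).mono_left (hEP a)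
  have hinter : μT (⋂ n, (P n : Set Torus)) = 0 := by
    by_contra hne
    have h1 : ∑' n, μT (E n) ≤ 1 := by
      rw [← measure_iUnion hEdisj fun n => (hEopen n).measurableSet]
      exact prob_le_one
    have h2 : ∑' _ : ℕ, 2⁻¹ ^ (d + 2) * μT (⋂ n, (P n : Set Torus)) ≤ ∑' n, μT (E n) :=
      ENNReal.tsum_le_tsum fun n => le_trans (by gcongr; exact Set.iInter_subset _ n) (hge (P n))
    rw [ENNReal.tsum_const_eq_top_of_ne_zero (mul_ne_zero (pow_ne_zero _ (by simp)) hne)] at h2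
    exact absurd (h2.trans h1) (by simp)
  have hdisj' : ∀ a, ∀ S ∈ 𝒞 (P a), ∀ b, ∀ S' ∈ 𝒞 (P b), a ≠ b → Disjoint (⋃₀ S) (⋃₀ S') :=
    fun a S hS b S' hS' hab => (hEdisj hab).mono
      (Set.subset_biUnion_of_mem (u := Set.sUnion) hS)
      (Set.subset_biUnion_of_mem (u := Set.sUnion) hS')
  refine ⟨⋃ n, 𝒞 (P n), Set.countable_iUnion fun n => (hfin _).countable, ?_, ?_, ?_, ?_, ?_⟩
  · intro hG0
    have hpos : ∀ n, μT (P n) ≠ 0 := by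
      intro n
      induction n with
      | zero => rwa [hP0]
      | succ n ih =>
        intro h0
        have h1 : μT (P n) ≤ μT (P (n + 1)) + (μT (E n) + μT (closure (E n) \ E n)) := by
          refine le_trans (measure_mono ?_) ((measure_union_le _ _).trans
            (add_le_add_right (measure_union_le _ _) _))
          rw [hPs]
          intro x hx
          by_cases h : x ∈ closure (E n)
          · by_cases h' : x ∈ E n
            · exact Or.inr (Or.inl h')
            · exact Or.inr (Or.inr ⟨h, h'⟩)
          · exact Or.inl ⟨hx, h⟩
        rw [h0, hnull, zero_add, add_zero] at h1
        have h2 := h1.trans (hle (P n))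
        rw [mul_comm, ← div_eq_mul_inv] at h2
        exact absurd (ENNReal.half_lt_self ih (measure_ne_top _ _)) (not_lt.2 h2)
    have hne : ∀ n, ∃ S, S ∈ 𝒞 (P n) := by
      intro n
      by_contra! hcon
      have h1 := hge (P n)
      have h2 : (⋃ S ∈ 𝒞 (P n), ⋃₀ S) = ∅ := by simp [Set.eq_empty_of_forall_notMem hcon]
      rw [h2, measure_empty, nonpos_iff_eq_zero, mul_eq_zero] at h1
      exact h1.elim (pow_ne_zero _ (by simp)) (hpos n)
    choose S hS using hne
    refine Set.infinite_of_injective_forall_mem (f := S) ?_ fun n => Set.mem_iUnion.2 ⟨n, hS n⟩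
    intro a b hab
    by_contra hne
    have h1 := hdisj' a (S a) (hS a) b (S b) (hS b) hne
    rw [← hab, disjoint_self] at h1
    exact (Config.sUnion_nonempty (hconf _ _ (hS a)).choose_spec).ne_empty h1
  · intro S hS
    obtain ⟨n, hn⟩ := Set.mem_iUnion.1 hS
    exact hconf _ _ hn
  · intro S hS
    obtain ⟨n, hn⟩ := Set.mem_iUnion.1 hS
    exact (hsub _ _ hn).trans (hanti (Nat.zero_le n))
  · intro S hS S' hS' hne
    obtain ⟨a, ha⟩ := Set.mem_iUnion.1 hS
    obtain ⟨b, hb⟩ := Set.mem_iUnion.1 hS'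
    rcases eq_or_ne a b with rfl | hab
    · exact hdisj _ ha hb hne
    · exact hdisj' a S ha b S' hb hab
  · refine measure_mono_null (t := (⋂ n, (P n : Set Torus)) ∪ ⋃ n, (closure (E n) \ E n)) ?_
      (measure_union_null hinter (measure_iUnion_null hnull))
    rintro x ⟨hxG, hx⟩
    by_contra hcon
    simp only [Set.mem_union, not_or, Set.mem_iUnion, not_exists] at hcon
    have hall : ∀ n, x ∈ (P n : Set Torus) := by
      intro n
      induction n with
      | zero => exact hxG
      | succ n ih =>
        rw [hPs]
        refine ⟨ih, fun h => hcon.2 n ⟨h, fun h' => hx ?_⟩⟩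
        obtain ⟨S, hS, hxS⟩ := Set.mem_iUnion₂.1 h'
        exact Set.mem_iUnion₂.2 ⟨S, Set.mem_iUnion.2 ⟨n, hS⟩, hxS⟩
    exact hcon.1 (Set.mem_iInter.2 hall)

/-- The configurations of one generation, subordinate to disjoint open sets `A k`, together with
a subfamily filling a prescribed proportion of each `A k`. -/
lemma exists_generation {d : ℕ} (hd : 0 < d) {ε : ℝ} (hε : 0 < ε) (hε' : ε ≤ 1 / 2) {θ : ℝ≥0∞}
    (hθ : θ ≤ 1) {A : ℕ → Set Torus} (hA : ∀ k, IsOpen (A k))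
    (hAd : Pairwise fun k l => Disjoint (A k) (A l)) (hA0 : μT (⋃ k, A k) ≠ 0) :
    ∃ (𝒮 : ℕ → Set (Set Torus)) (Λ : Set ℕ), (∀ n, ∃ Q, IsConfig ε d Q (𝒮 n)) ∧
      (Pairwise fun n₁ n₂ => Disjoint (⋃₀ 𝒮 n₁) (⋃₀ 𝒮 n₂)) ∧
      (∀ n, ∃ k, ⋃₀ 𝒮 n ⊆ A k) ∧ μT ((⋃ k, A k) \ ⋃ n, ⋃₀ 𝒮 n) = 0 ∧
      ∀ k, μT (A k ∩ ⋃ n ∈ Λ, ⋃₀ 𝒮 n) = θ * μT (A k) := by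
  choose P P' hPo hPo' hPA hPA' hPd hPμ hPnull using fun k => exists_split (hA k) hθ
  choose 𝒞 hcount hinf hconf hsub hdisj hnull using
    fun k => exists_countable_configs hd hε hε' (hPo k)
  choose 𝒞' hcount' hinf' hconf' hsub' hdisj' hnull' using
    fun k => exists_countable_configs hd hε hε' (hPo' k)
  set 𝒯 : Set (Set (Set Torus)) := (⋃ k, 𝒞 k) ∪ ⋃ k, 𝒞' k with h𝒯
  have hPP : ∀ k l, Disjoint (P k) (P' l) := by
    intro k l
    rcases eq_or_ne k l with rfl | h
    · exact hPd k
    · exact (hAd h).mono (hPA k) (hPA' l)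
  have h𝒯conf : ∀ S ∈ 𝒯, ∃ Q, IsConfig ε d Q S := by
    rintro S (hS | hS) <;> obtain ⟨k, hk⟩ := Set.mem_iUnion.1 hS
    exacts [hconf k S hk, hconf' k S hk]
  have h𝒯disj : 𝒯.PairwiseDisjoint Set.sUnion := by
    rintro S hS T hT hne
    rcases hS with hS | hS <;> rcases hT with hT | hT <;> obtain ⟨k, hk⟩ := Set.mem_iUnion.1 hS <;>
      obtain ⟨l, hl⟩ := Set.mem_iUnion.1 hT
    · rcases eq_or_ne k l with rfl | h
      · exact hdisj k hk hl hne
      · exact (hAd h).mono ((hsub k S hk).trans (hPA k)) ((hsub l T hl).trans (hPA l))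
    · exact (hPP k l).mono (hsub k S hk) (hsub' l T hl)
    · exact (hPP l k).symm.mono (hsub' k S hk) (hsub l T hl)
    · rcases eq_or_ne k l with rfl | h
      · exact hdisj' k hk hl hne
      · exact (hAd h).mono ((hsub' k S hk).trans (hPA' k)) ((hsub' l T hl).trans (hPA' l))
  have h𝒯count : 𝒯.Countable :=
    (Set.countable_iUnion hcount).union (Set.countable_iUnion hcount')
  have h𝒯inf : 𝒯.Infinite := by
    obtain ⟨k, hk⟩ : ∃ k, μT (A k) ≠ 0 := by
      by_contra! hcon
      exact hA0 (measure_iUnion_null hcon)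
    rcases eq_or_ne (μT (P k)) 0 with h | h
    · refine ((hinf' k) fun h' => hk ?_).mono
        ((Set.subset_iUnion 𝒞' k).trans Set.subset_union_right)
      refine measure_mono_null (t := (P k ∪ P' k) ∪ (A k \ (P k ∪ P' k))) ?_
        (measure_union_null (measure_union_null h h') (hPnull k))
      rw [Set.union_sdiff_self]
      exact Set.subset_union_right
    · exact ((hinf k) h).mono ((Set.subset_iUnion 𝒞 k).trans Set.subset_union_left)
  have : Countable 𝒯 := h𝒯count.to_subtype
  have : Infinite 𝒯 := h𝒯inf.to_subtype
  obtain ⟨f⟩ : Nonempty (ℕ ≃ 𝒯) := by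
    obtain ⟨_⟩ := nonempty_denumerable 𝒯
    exact ⟨(Denumerable.eqv 𝒯).symm⟩
  have hcov : ∀ S ∈ 𝒯, ∃ n, (f n : Set (Set Torus)) = S := fun S hS =>
    ⟨f.symm ⟨S, hS⟩, by simp⟩
  refine ⟨fun n => f n, {n | (f n : Set (Set Torus)) ∈ ⋃ k, 𝒞 k}, fun n => h𝒯conf _ (f n).2,
    fun a b hab => h𝒯disj (f a).2 (f b).2 fun h => hab (f.injective (Subtype.ext h)), ?_, ?_, ?_⟩
  · intro n
    rcases (f n).2 with hS | hS <;> obtain ⟨k, hk⟩ := Set.mem_iUnion.1 hS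
    · exact ⟨k, (hsub k _ hk).trans (hPA k)⟩
    · exact ⟨k, (hsub' k _ hk).trans (hPA' k)⟩
  · refine measure_mono_null (t := ⋃ k, ((A k \ (P k ∪ P' k)) ∪
      ((P k \ ⋃ S ∈ 𝒞 k, ⋃₀ S) ∪ (P' k \ ⋃ S ∈ 𝒞' k, ⋃₀ S)))) ?_
      (measure_iUnion_null fun k =>
        measure_union_null (hPnull k) (measure_union_null (hnull k) (hnull' k)))
    rintro x ⟨hx, hx'⟩
    obtain ⟨k, hk⟩ := Set.mem_iUnion.1 hx
    refine Set.mem_iUnion.2 ⟨k, ?_⟩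
    have hx𝒯 : ∀ S ∈ 𝒯, x ∉ ⋃₀ S := by
      intro S hS hxS
      obtain ⟨n, rfl⟩ := hcov S hS
      exact hx' (Set.mem_iUnion.2 ⟨n, hxS⟩)
    by_cases h : x ∈ P k ∪ P' k
    · refine Or.inr (h.imp (fun h => ⟨h, fun hmem => ?_⟩) fun h => ⟨h, fun hmem => ?_⟩)
      · obtain ⟨S, hS, hxS⟩ := Set.mem_iUnion₂.1 hmem
        exact hx𝒯 S (Or.inl (Set.mem_iUnion.2 ⟨k, hS⟩)) hxS
      · obtain ⟨S, hS, hxS⟩ := Set.mem_iUnion₂.1 hmem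
        exact hx𝒯 S (Or.inr (Set.mem_iUnion.2 ⟨k, hS⟩)) hxS
    · exact Or.inl ⟨hk, h⟩
  · intro k
    have heq : (A k ∩ ⋃ n ∈ {n | (f n : Set (Set Torus)) ∈ ⋃ k, 𝒞 k}, ⋃₀ (f n : Set (Set Torus)))
        = ⋃ S ∈ 𝒞 k, ⋃₀ S := by
      refine Set.Subset.antisymm ?_ (Set.iUnion₂_subset fun S hS => ?_)
      · rintro x ⟨hxA, hx⟩
        obtain ⟨n, hn, hxn⟩ := Set.mem_iUnion₂.1 hx
        obtain ⟨l, hl⟩ := Set.mem_iUnion.1 hn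
        rcases eq_or_ne k l with rfl | h
        · exact Set.mem_iUnion₂.2 ⟨_, hl, hxn⟩
        · exact absurd (hPA l (hsub l _ hl hxn)) (Set.disjoint_left.1 (hAd h) hxA)
      · refine Set.subset_inter ((hsub k S hS).trans (hPA k)) ?_
        obtain ⟨n, hn⟩ := hcov S (Or.inl (Set.mem_iUnion.2 ⟨k, hS⟩))
        rw [← hn]
        exact Set.subset_biUnion_of_mem (u := fun n => ⋃₀ (f n : Set (Set Torus)))
          (show (f n : Set (Set Torus)) ∈ ⋃ k, 𝒞 k from hn ▸ Set.mem_iUnion.2 ⟨k, hS⟩)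
    rw [heq, ← hPμ k]
    refine le_antisymm (measure_mono (Set.iUnion₂_subset (hsub k))) ?_
    have := measure_le_inter_add_sdiff μT (P k) (⋃ S ∈ 𝒞 k, ⋃₀ S)
    rw [hnull, add_zero] at this
    exact this.trans (measure_mono Set.inter_subset_right)

/-- The union of a family of sets with the boundaries of its members removed. -/
def trim (𝒮 : Set (Set Torus)) : Set Torus := ⋃₀ 𝒮 \ ⋃ Q ∈ 𝒮, frontier Q

lemma trim_subset (𝒮 : Set (Set Torus)) : trim 𝒮 ⊆ ⋃₀ 𝒮 := Set.sdiff_subset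

section Trim

variable {ε : ℝ} {d : ℕ} {Q₀ : Set Torus} {𝒮 : Set (Set Torus)}

lemma isOpen_trim (h : IsConfig ε d Q₀ 𝒮) : IsOpen (trim 𝒮) :=
  (Config.isOpen_sUnion h).sdiff
    ((Config.finite h).isClosed_biUnion fun _ _ => isClosed_frontier)

lemma μT_sUnion_diff_trim (h : IsConfig ε d Q₀ 𝒮) : μT (⋃₀ 𝒮 \ trim 𝒮) = 0 := by
  refine measure_mono_null (t := ⋃ Q ∈ 𝒮, frontier Q) ?_
    ((measure_biUnion_null_iff (Config.finite h).countable).2 fun Q hQ =>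
      Config.μT_frontier_mem h hQ)
  rw [trim, Set.sdiff_sdiff_right_self]
  exact Set.inter_subset_right

lemma inter_eq_empty_or_subset_of_subset_trim (h : IsConfig ε d Q₀ 𝒮) {Q R : Set Torus}
    (hQ : Q ∈ 𝒮) (hR : IsPreconnected R) (hRt : R ⊆ trim 𝒮) : Q ∩ R = ∅ ∨ R ⊆ Q := by
  have hcov : R ⊆ Q ∪ (closure Q)ᶜ := by
    intro x hx
    by_contra hcon
    simp only [Set.mem_union, Set.mem_compl_iff, not_or, not_not] at hcon
    refine (hRt hx).2 (Set.mem_iUnion₂.2 ⟨Q, hQ, ?_⟩)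
    rw [(Config.isOpen_mem h hQ).frontier_eq]
    exact ⟨hcon.2, hcon.1⟩
  have hd : Disjoint Q (closure Q)ᶜ :=
    Set.disjoint_left.2 fun x hx hx' => hx' (subset_closure hx)
  rcases hR.subset_or_subset (Config.isOpen_mem h hQ) isClosed_closure.isOpen_compl hd hcov
    with h1 | h1
  · exact Or.inr h1
  · exact Or.inl (Set.disjoint_iff_inter_eq_empty.1 (hd.mono_right h1))

end Trim

lemma exists_generations {G : Set Torus} (hG : IsOpen G) (hG0 : μT G ≠ 0)
    {d : ℕ → ℕ} (hd : ∀ j, 0 < d j) {ε : ℕ → ℝ} (hε : ∀ j, 0 < ε j) (hε' : ∀ j, ε j ≤ 1 / 2)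
    {θ : ℕ → ℝ≥0∞} (hθ : ∀ j, θ j ≤ 1) :
    ∃ 𝒮 : ℕ → ℕ → Set (Set Torus),
      (∀ j n, ∃ Q, IsConfig (ε j) (d j) Q (𝒮 j n)) ∧
      (∀ j, Pairwise fun n₁ n₂ => Disjoint (⋃₀ 𝒮 j n₁) (⋃₀ 𝒮 j n₂)) ∧
      (∀ j, μT (G \ ⋃ n, ⋃₀ 𝒮 j n) = 0) ∧
      (∀ j₁ j₂, j₁ < j₂ → ∀ n₁ n₂, ∀ Q₁ ∈ 𝒮 j₁ n₁, ∀ Q₂ ∈ 𝒮 j₂ n₂,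
        Q₁ ∩ Q₂ = ∅ ∨ Q₂ ⊆ Q₁) ∧
      ∃ Λ : ℕ → Set ℕ, ∀ J : Finset ℕ, J.Nonempty →
        μT (⋂ j ∈ J, ⋃ n ∈ Λ j, ⋃₀ 𝒮 j n) = μT G * ∏ j ∈ J, θ j := by
  let State := {A : ℕ → Set Torus // (∀ k, IsOpen (A k)) ∧
    (Pairwise fun k l => Disjoint (A k) (A l)) ∧ μT (⋃ k, A k) ≠ 0}
  choose S Λ hconf hdisj hsub hnull hΛ using fun (j : ℕ) (A : State) =>
    exists_generation (hd j) (hε j) (hε' j) (hθ j) A.2.1 A.2.2.1 A.2.2.2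
  have htrim : ∀ j (A : State), μT ((⋃ k, A.1 k) \ ⋃ n, trim (S j A n)) = 0 := by
    intro j A
    refine measure_mono_null (t := ((⋃ k, A.1 k) \ ⋃ n, ⋃₀ S j A n) ∪
      ⋃ n, (⋃₀ S j A n \ trim (S j A n))) ?_ (measure_union_null (hnull j A)
        (measure_iUnion_null fun n => μT_sUnion_diff_trim (hconf j A n).choose_spec))
    rintro x ⟨hx, hx'⟩
    by_cases h : x ∈ ⋃ n, ⋃₀ S j A n
    · obtain ⟨n, hn⟩ := Set.mem_iUnion.1 h
      exact Or.inr (Set.mem_iUnion.2 ⟨n, hn, fun h' => hx' (Set.mem_iUnion.2 ⟨n, h'⟩)⟩)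
    · exact Or.inl ⟨hx, h⟩
  let init : State := ⟨fun k => if k = 0 then G else ∅, by
    refine ⟨fun k => ?_, fun k l hkl => ?_, fun h => hG0 (measure_mono_null ?_ h)⟩
    · dsimp only
      split_ifs
      exacts [hG, isOpen_empty]
    · by_cases hk : k = 0
      · simp [show l ≠ 0 by omega]
      · simp [hk]
    · exact Set.subset_iUnion_of_subset 0 (by simp)⟩
  let next : ℕ → State → State := fun j A => ⟨fun n => trim (S j A n),
    fun n => isOpen_trim (hconf j A n).choose_spec,
    fun a b hab => (hdisj j A hab).mono (trim_subset _) (trim_subset _),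
    fun h => A.2.2.2 (measure_mono_null (Set.subset_union_right.trans
      (Set.union_sdiff_self (s := ⋃ n, trim (S j A n)) (t := ⋃ k, A.1 k)).ge)
      (measure_union_null h (htrim j A)))⟩
  let A : ℕ → State := fun j => Nat.rec init next j
  have hA0 : ∀ k, (A 0).1 k ⊆ G := by
    intro k
    change (if k = 0 then G else ∅) ⊆ G
    split_ifs
    exacts [subset_rfl, Set.empty_subset _]
  have hAs : ∀ j n, (A (j + 1)).1 n = trim (S j (A j) n) := fun _ _ => rfl
  have hAopen : ∀ j k, IsOpen ((A j).1 k) := fun j => (A j).2.1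
  have href : ∀ i j, i ≤ j → ∀ k, ∃ l, (A j).1 k ⊆ (A i).1 l := by
    intro i j hij
    induction j, hij using Nat.le_induction with
    | base => exact fun k => ⟨k, subset_rfl⟩
    | succ j hij ih =>
      intro k
      obtain ⟨l, hl⟩ := hsub j (A j) k
      obtain ⟨l', hl'⟩ := ih l
      exact ⟨l', ((hAs j k).le.trans (trim_subset _)).trans (hl.trans hl')⟩
  have hAG : ∀ j k, (A j).1 k ⊆ G := by
    intro j k
    obtain ⟨l, hl⟩ := href 0 j (Nat.zero_le j) k
    exact hl.trans (hA0 l)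
  have hAnull : ∀ j, μT (G \ ⋃ k, (A j).1 k) = 0 := by
    intro j
    induction j with
    | zero =>
      have : G ⊆ ⋃ k, (A 0).1 k := Set.subset_iUnion_of_subset 0
        (show G ⊆ if 0 = 0 then G else ∅ from (if_pos rfl).ge)
      rw [Set.sdiff_eq_empty.2 this, measure_empty]
    | succ j ih =>
      refine measure_mono_null ?_ (measure_union_null ih (htrim j (A j)))
      rintro x ⟨hx, hx'⟩
      by_cases h : x ∈ ⋃ k, (A j).1 k
      · exact Or.inr ⟨h, hx'⟩
      · exact Or.inl ⟨hx, h⟩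
  refine ⟨fun j n => S j (A j) n, fun j n => hconf j (A j) n, fun j => hdisj j (A j), ?_, ?_,
    fun j => Λ j (A j), ?_⟩
  · intro j
    refine measure_mono_null (Set.sdiff_subset_sdiff_right ?_) (hAnull (j + 1))
    exact Set.iUnion_mono fun n => trim_subset _
  · intro j₁ j₂ hj n₁ n₂ Q₁ hQ₁ Q₂ hQ₂
    obtain ⟨k, hk⟩ := hsub j₂ (A j₂) n₂
    obtain ⟨l, hl⟩ := href (j₁ + 1) j₂ hj k
    have hQ₂l : Q₂ ⊆ trim (S j₁ (A j₁) l) :=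
      (Set.subset_sUnion_of_mem hQ₂).trans (hk.trans hl)
    rcases eq_or_ne n₁ l with rfl | h
    · exact inter_eq_empty_or_subset_of_subset_trim (hconf j₁ (A j₁) n₁).choose_spec hQ₁
        (Config.isPreconnected_mem (hconf j₂ (A j₂) n₂).choose_spec hQ₂) hQ₂l
    · exact Or.inl (Set.disjoint_iff_inter_eq_empty.1 ((hdisj j₁ (A j₁) h).mono
        (Set.subset_sUnion_of_mem hQ₁) (hQ₂l.trans (trim_subset _))))
  · set F : ℕ → Set Torus := fun j => ⋃ n ∈ Λ j (A j), ⋃₀ S j (A j) n with hF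
    have hFA : ∀ j, F j ⊆ ⋃ k, (A j).1 k := by
      refine fun j => Set.iUnion₂_subset fun n _ => ?_
      obtain ⟨k, hk⟩ := hsub j (A j) n
      exact Set.subset_iUnion_of_subset k hk
    have hFG : ∀ j, F j ⊆ G := fun j => (hFA j).trans (Set.iUnion_subset (hAG j))
    have hFopen : ∀ j, IsOpen (F j) := fun j => isOpen_biUnion fun n _ =>
      Config.isOpen_sUnion (hconf j (A j) n).choose_spec
    have hsplit : ∀ i a, i < a → ∀ k, (A a).1 k ⊆ F i ∨ Disjoint ((A a).1 k) (F i) := by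
      intro i a hia k
      obtain ⟨l, hl⟩ := href (i + 1) a hia k
      have hl' : (A a).1 k ⊆ ⋃₀ S i (A i) l := hl.trans (trim_subset _)
      by_cases hlΛ : l ∈ Λ i (A i)
      · exact Or.inl (hl'.trans
          (Set.subset_biUnion_of_mem (u := fun n => ⋃₀ S i (A i) n) hlΛ))
      · refine Or.inr (Disjoint.mono_left hl' ?_)
        refine Set.disjoint_iUnion₂_right.2 fun n hn => hdisj i (A i) ?_
        rintro rfl
        exact hlΛ hn
    have key : ∀ J : Finset ℕ, μT (G ∩ ⋂ j ∈ J, F j) = μT G * ∏ j ∈ J, θ j := by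
      intro J
      induction J using Finset.induction_on_max with
      | empty => simp
      | insert a s hs ih =>
        set X : Set Torus := G ∩ ⋂ j ∈ s, F j with hX
        have hXopen : IsOpen X := hG.inter (isOpen_biInter_finset fun j _ => hFopen j)
        have hXsplit : ∀ k, (A a).1 k ⊆ X ∨ Disjoint ((A a).1 k) X := by
          intro k
          by_cases h : ∀ i ∈ s, (A a).1 k ⊆ F i
          · exact Or.inl (Set.subset_inter (hAG a k) (Set.subset_iInter₂ h))
          · push Not at h
            obtain ⟨i, hi, hi'⟩ := h
            refine Or.inr (((hsplit i a (hs i hi) k).resolve_left hi').mono_right ?_)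
            exact Set.inter_subset_right.trans (Set.biInter_subset_of_mem hi)
        have hsum : ∀ Y, IsOpen Y → Y ⊆ G → μT Y = ∑' k, μT (Y ∩ (A a).1 k) := by
          intro Y hY hYG
          rw [← measure_iUnion (fun k l hkl => ((A a).2.2.1 hkl).mono Set.inter_subset_right
            Set.inter_subset_right) fun k => (hY.inter (hAopen a k)).measurableSet,
            ← Set.inter_iUnion]
          refine le_antisymm ?_ (measure_mono Set.inter_subset_left)
          have h := measure_le_inter_add_sdiff μT Y (⋃ k, (A a).1 k)
          rwa [measure_mono_null (Set.sdiff_subset_sdiff_left hYG) (hAnull a), add_zero] at h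
        have heq : G ∩ ⋂ j ∈ insert a s, F j = X ∩ F a := by
          rw [Finset.set_biInter_insert, hX, Set.inter_assoc, Set.inter_comm (F a)]
        rw [heq, Finset.prod_insert fun h => lt_irrefl a (hs a h), mul_left_comm, ← ih,
          hsum _ (hXopen.inter (hFopen a)) (Set.inter_subset_left.trans Set.inter_subset_left),
          hsum X hXopen Set.inter_subset_left, ← ENNReal.tsum_mul_left]
        refine tsum_congr fun k => ?_
        rcases hXsplit k with h | h
        · have h1 : X ∩ F a ∩ (A a).1 k = (A a).1 k ∩ F a := by
            rw [Set.inter_right_comm, Set.inter_eq_right.2 h]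
          rw [h1, Set.inter_eq_right.2 h]
          exact hΛ a (A a) k
        · rw [Set.disjoint_iff_inter_eq_empty.1 h.symm, Set.inter_right_comm,
            Set.disjoint_iff_inter_eq_empty.1 h.symm]
          simp
    rintro J ⟨j, hj⟩
    have h : ⋂ j ∈ J, F j ⊆ G := (Set.biInter_subset_of_mem hj).trans (hFG j)
    rw [← key J, Set.inter_eq_right.2 h]

lemma μT_diff_interior_of_isRectangle {U : Set Torus} (hU : IsRectangle U) :
    μT (U \ interior U) = 0 := by
  obtain ⟨I, hI, hfin, rfl⟩ := hU
  have hfin' : {d | I d ≠ Set.univ}.Finite := hfin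
  have heq : Set.univ.pi I = {d | I d ≠ Set.univ}.pi I := by
    ext x
    simp only [Set.mem_pi, Set.mem_univ, true_imp_iff, Set.mem_ofPred_eq]
    refine ⟨fun h i _ => h i, fun h i => ?_⟩
    by_cases hi : I i = Set.univ
    · rw [hi]; trivial
    · exact h i hi
  rw [heq]
  refine measure_mono_null (t := ⋃ i, {x : Torus | x i ∈ I i \ interior (I i)}) ?_
    (measure_iUnion_null fun i => μT_preimage_eval_countable i ?_)
  · rintro x ⟨hx, hx'⟩
    rw [interior_pi_set hfin'] at hx'
    simp only [Set.mem_pi, not_forall] at hx hx'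
    obtain ⟨i, hi, hxi⟩ := hx'
    exact Set.mem_iUnion.2 ⟨i, hx i hi, hxi⟩
  · obtain ⟨J, hJ, hIJ⟩ := hI i
    rw [hIJ]
    exact diff_interior_arc_countable hJ

end RubioDeFrancia

open RubioDeFrancia

/-- **Theorem (statement 12, Proposition P3).** Fix a rectangle `U ⊆ 𝕋^ω`, sequences
`(d_j)` and `(m_j)` of positive integers, and a sequence `(ε_j)` with `ε_j ∈ (0,1/2]`.
Then there exists a family `𝒮 = ⋃_j ⋃_n 𝒮_{j,n}` such that:
(A1) each `𝒮_{j,n}` is an `(ε_j, d_j)`-configuration around some `Q_{j,n} ∈ R₀`;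
(A2) for every `j`, `U` is covered, up to a set of measure zero, by the pairwise disjoint
sets `E_{j,n} = ⋃_{Q ∈ 𝒮_{j,n}} Q`;
(A3) for all `j₁ < j₂` and `n₁, n₂`, if `Q₁ ∈ 𝒮_{j₁,n₁}` and `Q₂ ∈ 𝒮_{j₂,n₂}`, then
`Q₁ ∩ Q₂ = ∅` or `Q₂ ⊆ Q₁`;
(A4) there are subsets `Λ_j ⊆ ℕ` such that the sets `F_j* = ⋃_{n ∈ Λ_j} E_{j,n}` are mutually
independent events of probability `2^{-m_j}` with respect to the uniform probability measure
on `U`. -/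
theorem statement12 (U : Set Torus) (hU : IsRectangle U)
    (d m : ℕ → ℕ) (hd : ∀ j, 0 < d j) (hm : ∀ j, 0 < m j)
    (ε : ℕ → ℝ) (hε : ∀ j, 0 < ε j) (hε' : ∀ j, ε j ≤ 1 / 2) :
    ∃ (Q : ℕ → ℕ → Set Torus) (𝒮 : ℕ → ℕ → Set (Set Torus)),
      (∀ j n, IsConfig (ε j) (d j) (Q j n) (𝒮 j n)) ∧
      (∀ j, Pairwise fun n₁ n₂ => Disjoint (⋃₀ 𝒮 j n₁) (⋃₀ 𝒮 j n₂)) ∧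
      (∀ j, μT (U \ ⋃ n, ⋃₀ 𝒮 j n) = 0) ∧
      (∀ j₁ j₂, j₁ < j₂ → ∀ n₁ n₂, ∀ Q₁ ∈ 𝒮 j₁ n₁, ∀ Q₂ ∈ 𝒮 j₂ n₂,
        Q₁ ∩ Q₂ = ∅ ∨ Q₂ ⊆ Q₁) ∧
      ∃ Λ : ℕ → Set ℕ, ∀ J : Finset ℕ, J.Nonempty →
        μT (⋂ j ∈ J, ⋃ n ∈ Λ j, ⋃₀ 𝒮 j n) = μT U * ∏ j ∈ J, 2⁻¹ ^ m j := by
  have hθ : ∀ j, (2⁻¹ : ℝ≥0∞) ^ m j ≤ 1 := fun j => pow_le_one' (by simp) _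
  have hnull := μT_diff_interior_of_isRectangle hU
  have hUint : μT U = μT (interior U) := by
    refine le_antisymm ?_ (measure_mono interior_subset)
    have h := measure_le_inter_add_sdiff μT U (interior U)
    rw [hnull, add_zero] at h
    exact h.trans (measure_mono Set.inter_subset_right)
  rcases eq_or_ne (μT U) 0 with h0 | h0
  · obtain ⟨𝒮, hconf, hdisj, -, hnest, -⟩ := exists_generations (G := Set.univ) isOpen_univ
      (by simp) hd hε hε' hθ
    choose Q hQ using hconf
    refine ⟨Q, 𝒮, hQ, hdisj, fun j => measure_mono_null Set.sdiff_subset h0, hnest,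
      fun _ => ∅, fun J hJ => ?_⟩
    obtain ⟨j, hj⟩ := hJ
    rw [h0, zero_mul]
    exact measure_mono_null (Set.biInter_subset_of_mem hj) (by simp)
  · obtain ⟨𝒮, hconf, hdisj, hcov, hnest, Λ, hΛ⟩ := exists_generations isOpen_interior
      (hUint ▸ h0) hd hε hε' hθ
    choose Q hQ using hconf
    refine ⟨Q, 𝒮, hQ, hdisj, fun j => ?_, hnest, Λ, fun J hJ => by rw [hΛ J hJ, hUint]⟩
    refine measure_mono_null ?_ (measure_union_null hnull (hcov j))
    rintro x ⟨hx, hx'⟩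
    by_cases h : x ∈ interior U
    · exact Or.inr ⟨h, hx'⟩
    · exact Or.inl ⟨hx, h⟩
end
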